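/- arXiv:2605.02632 — 7 statements merged into one kernel-verified Lean document; each statement's English description precedes it below -/
import Mathlib

section
/- Let p be an odd prime and let a, b, c be integers with gcd(a, b, c) = 1 satisfying −5a² + b⁵ = c^(2p). Then b is odd, and there exist coprime integers m, n, not both odd, such that a = 5n(m⁴ − 10m²n² + 5n⁴) and c^p = m(m⁴ − 50m²n² + 125n⁴). In particular, 5 ∣ a. -/
namespace S2
abbrev R := Zsqrtd (-5)

instance : NoZeroDivisors R := ⟨by
  intro a b h
  have h1 : Zsqrtd.norm a * Zsqrtd.norm b = 0 := by rw [← Zsqrtd.norm_mul, h]; simp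
  rcases mul_eq_zero.1 h1 with h | h
  · left; exact (Zsqrtd.norm_eq_zero_iff (by norm_num) a).1 h
  · right; exact (Zsqrtd.norm_eq_zero_iff (by norm_num) b).1 h⟩

instance : IsDomain R := NoZeroDivisors.to_isDomain _

lemma round_one (X N : ℤ) (hN : 0 < N) : ∃ r : ℤ, 2 * |X - r * N| ≤ N := by
  have h1 := Int.emod_nonneg X hN.ne'
  have h2 := Int.emod_lt_of_pos X hN
  have h3 := Int.emod_add_mul_ediv X N
  by_cases h : 2 * (X % N) ≤ N
  · refine ⟨X / N, ?_⟩
    have : X - X / N * N = X % N := by linarith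
    rw [this, abs_of_nonneg h1]; exact h
  · refine ⟨X / N + 1, ?_⟩
    have : X - (X / N + 1) * N = X % N - N := by linarith
    rw [this, abs_of_neg (by linarith)]; linarith

lemma near (X Y N : ℤ) (hN : 0 < N) :
    ∃ k r s : ℤ, (k = 1 ∨ k = 2) ∧ (k * X - r * N) ^ 2 + 5 * (k * Y - s * N) ^ 2 < N ^ 2 := by
  obtain ⟨s, hs⟩ := round_one Y N hN
  have hs0 := abs_nonneg (Y - s * N)
  have sq4 : ∀ t : ℤ, 2 * |t| ≤ N → 4 * t ^ 2 ≤ N ^ 2 := by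
    intro t ht
    rw [← sq_abs t]; nlinarith [abs_nonneg t]
  by_cases h : 8 * |Y - s * N| ≤ 3 * N
  · obtain ⟨r, hr⟩ := round_one X N hN
    refine ⟨1, r, s, Or.inl rfl, ?_⟩
    rw [one_mul, one_mul]
    have h1 := sq4 _ hr
    have h2 : 64 * (Y - s * N) ^ 2 ≤ 9 * N ^ 2 := by
      rw [← sq_abs (Y - s * N)]; nlinarith
    nlinarith
  · obtain ⟨r, hr⟩ := round_one (2 * X) N hN
    have h1 := sq4 _ hr
    have : ∃ s' : ℤ, 4 * |2 * Y - s' * N| ≤ N := by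
      rcases le_total 0 (Y - s * N) with h0 | h0
      · rw [abs_of_nonneg h0] at *
        refine ⟨2 * s + 1, ?_⟩
        have : 2 * Y - (2 * s + 1) * N = 2 * (Y - s * N) - N := by ring
        rw [this, abs_of_nonpos (by linarith)]; linarith
      · rw [abs_of_nonpos h0] at *
        refine ⟨2 * s - 1, ?_⟩
        have : 2 * Y - (2 * s - 1) * N = 2 * (Y - s * N) + N := by ring
        rw [this, abs_of_nonneg (by linarith)]; linarith
    obtain ⟨s', hs'⟩ := this
    refine ⟨2, r, s', Or.inr rfl, ?_⟩
    have h2 : 16 * (2 * Y - s' * N) ^ 2 ≤ N ^ 2 := by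
      rw [← sq_abs (2 * Y - s' * N)]; nlinarith [abs_nonneg (2 * Y - s' * N)]
    nlinarith

lemma norm_pos' (x : R) (hx : x ≠ 0) : 0 < x.norm := by
  have h1 := Zsqrtd.norm_nonneg (by norm_num : (-5 : ℤ) ≤ 0) x
  have h2 := (Zsqrtd.norm_eq_zero_iff (by norm_num : (-5 : ℤ) < 0) x).not.2 hx
  omega

lemma div_near (α β : R) (hα : α ≠ 0) :
    ∃ (k : ℤ) (q : R), (k = 1 ∨ k = 2) ∧ ((k : R) * β - q * α).norm < α.norm := by
  have hN := norm_pos' α hα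
  obtain ⟨k, r, s, hk, h⟩ := near (β * star α).re (β * star α).im α.norm hN
  refine ⟨k, ⟨r, s⟩, hk, ?_⟩
  have key : ((k : R) * β - ⟨r, s⟩ * α).norm * α.norm
    = (k * (β * star α).re - r * α.norm) ^ 2 + 5 * (k * (β * star α).im - s * α.norm) ^ 2 := by
    simp [Zsqrtd.norm_def]; ring
  rw [← key] at h
  nlinarith

lemma sq_principal (I : Ideal R) (hI : I ≠ ⊥) : ∃ γ : R, I ^ 2 = Ideal.span {γ} := by
  obtain ⟨α, ⟨hαI, hα⟩, hmin⟩ : ∃ α : R, (α ∈ I ∧ α ≠ 0) ∧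
      ∀ β : R, β ∈ I ∧ β ≠ 0 → α.norm.toNat ≤ β.norm.toNat := by
    obtain ⟨x, hx, hx0⟩ := Submodule.exists_mem_ne_zero_of_ne_bot hI
    obtain ⟨α, h1, h2⟩ := WellFounded.has_min (measure (fun x : R => x.norm.toNat)).wf
      {x : R | x ∈ I ∧ x ≠ 0} ⟨x, hx, hx0⟩
    exact ⟨α, h1, fun β hβ => not_lt.1 (h2 β hβ)⟩
  have two0 : (2 : R) ≠ 0 := by
    intro h; have := congrArg Zsqrtd.re h; simp at this
  have hdiv : ∀ β ∈ I, ∃ q : R, 2 * β = q * α := by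
    intro β hβ
    obtain ⟨k, q, hk, h⟩ := div_near α β hα
    have hz : (k : R) * β - q * α = 0 := by
      by_contra hne
      have := hmin _ ⟨I.sub_mem (I.mul_mem_left _ hβ) (I.mul_mem_left _ hαI), hne⟩
      have := norm_pos' _ hne
      omega
    have hz := sub_eq_zero.1 hz
    rcases hk with rfl | rfl
    · refine ⟨2 * q, ?_⟩
      push_cast at hz
      linear_combination 2 * hz
    · exact ⟨q, by simpa using hz⟩
  have principal : ∀ γ, I = Ideal.span {γ} → ∃ γ : R, I ^ 2 = Ideal.span {γ} := by
    rintro γ rfl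
    exact ⟨γ ^ 2, Ideal.span_singleton_pow _ _⟩
  by_cases c1 : ∃ β ∈ I, ∃ q : R, 2 * β = q * α ∧ Odd (q.re + q.im)
  · obtain ⟨β, hβ, q, hq, hodd⟩ := c1
    have hn : Odd q.norm := by
      rw [Zsqrtd.norm_def]
      rcases Int.even_or_odd q.re with h | h <;> rcases Int.even_or_odd q.im with h' | h' <;>
        simp_all [parity_simps] <;> grind
    obtain ⟨k, hk⟩ := hn
    have h1 : (q.norm : R) = q * star q := Zsqrtd.norm_eq_mul_conj q
    rw [hk] at h1
    push_cast at h1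
    have hγ : α = 2 * (star q * β - k * α) := by
      linear_combination α * h1 - star q * hq
    refine principal (star q * β - k * α) (le_antisymm ?_ ?_)
    · intro x hx
      obtain ⟨r, hr⟩ := hdiv x hx
      rw [Ideal.mem_span_singleton']
      refine ⟨r, mul_left_cancel₀ two0 ?_⟩
      linear_combination -hr - r * hγ
    · rw [Ideal.span_singleton_le_iff_mem]
      exact I.sub_mem (I.mul_mem_left _ hβ) (I.mul_mem_left _ hαI)
  · push Not at c1
    by_cases c2 : ∃ β ∈ I, ∃ q : R, 2 * β = q * α ∧ Odd q.re
    · obtain ⟨β0, hβ0, q, hq, hodd⟩ := c2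
      have form : ∀ q : R, Odd q.re → ¬ Odd (q.re + q.im) →
          ∃ r : R, q = ⟨1, 1⟩ + 2 * r := by
        intro q h1 h2
        obtain ⟨u, hu⟩ := h1
        have : Odd q.im := by grind
        obtain ⟨v, hv⟩ := this
        exact ⟨⟨u, v⟩, by ext <;> simp [hu, hv] <;> ring⟩
      obtain ⟨r, hr⟩ := form q hodd (by simpa using c1 β0 hβ0 q hq)
      obtain ⟨β, hβdef⟩ : ∃ β, β = β0 - r * α := ⟨_, rfl⟩
      have hβ : β ∈ I := hβdef ▸ I.sub_mem hβ0 (I.mul_mem_left _ hαI)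
      obtain ⟨ω, hω⟩ : ∃ ω : R, ω = ⟨0, 1⟩ := ⟨_, rfl⟩
      have h11 : (⟨1, 1⟩ : R) = 1 + ω := by rw [hω]; ext <;> simp
      have hω2 : ω * ω = -5 := by rw [hω]; ext <;> simp
      have hb : 2 * β = (1 + ω) * α := by
        rw [hβdef, ← h11]; rw [hr] at hq; linear_combination hq
      have hb2 : 2 * β ^ 2 = α ^ 2 * (-2 + ω) := by
        apply mul_left_cancel₀ two0
        linear_combination (2 * β + (1 + ω) * α) * hb + α ^ 2 * hω2
      obtain ⟨γ, hγd⟩ : ∃ γ, γ = 3 * α ^ 2 + ω * (β ^ 2 + α ^ 2) := ⟨_, rfl⟩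
      have g1 : α ^ 2 = 2 * γ := by
        rw [hγd]; linear_combination (-ω) * hb2 - α ^ 2 * hω2
      have g2 : α * β = (1 + ω) * γ := by
        apply mul_left_cancel₀ two0
        linear_combination α * hb + (1 + ω) * g1
      have g3 : β ^ 2 = (-2 + ω) * γ := by
        apply mul_left_cancel₀ two0
        linear_combination hb2 + (-2 + ω) * g1
      have hgen : I ≤ Ideal.span {α, β} := by
        intro x hx
        rw [Ideal.mem_span_pair]
        obtain ⟨t, ht⟩ := hdiv x hx
        rcases Int.even_or_odd t.re with h | h
        · have h2 := c1 x hx t ht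
          have : Even t.im := by grind
          obtain ⟨u, hu⟩ := h
          obtain ⟨v, hv⟩ := this
          have : t = 2 * ⟨u, v⟩ := by ext <;> simp [hu, hv] <;> ring
          refine ⟨⟨u, v⟩, 0, mul_left_cancel₀ two0 ?_⟩
          rw [this] at ht
          linear_combination -ht
        · obtain ⟨w, hw⟩ := form t h (by simpa using c1 x hx t ht)
          refine ⟨w, 1, mul_left_cancel₀ two0 ?_⟩
          rw [hw, h11] at ht
          linear_combination -ht + hb
      refine ⟨γ, le_antisymm ?_ ?_⟩
      · rw [pow_two]
        refine (Ideal.mul_mono hgen hgen).trans ?_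
        rw [Ideal.span_pair_mul_span_pair, Ideal.span_le]
        have e1 : α * α = 2 * γ := by rw [← g1]; ring
        have e2 : β * α = (1 + ω) * γ := by rw [← g2]; ring
        have e3 : β * β = (-2 + ω) * γ := by rw [← g3]; ring
        rw [e1, e2, e3, g2]
        rintro x (rfl | rfl | rfl | rfl) <;>
          exact Ideal.mul_mem_left _ _ (Ideal.mem_span_singleton_self _)
      · rw [Ideal.span_singleton_le_iff_mem, hγd]
        have a2 := Ideal.pow_mem_pow hαI 2
        have b2 := Ideal.pow_mem_pow hβ 2
        exact Ideal.add_mem _ (Ideal.mul_mem_left _ _ a2)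
          (Ideal.mul_mem_left _ _ (Ideal.add_mem _ b2 a2))
    · push Not at c2
      refine principal α (le_antisymm ?_ ?_)
      · intro x hx
        obtain ⟨t, ht⟩ := hdiv x hx
        have h1 := c1 x hx t ht
        have h2 := c2 x hx t ht
        have h3 : Even t.re := by simpa using h2
        have h4 : Even t.im := by grind
        obtain ⟨u, hu⟩ := h3
        obtain ⟨v, hv⟩ := h4
        have : t = 2 * ⟨u, v⟩ := by ext <;> simp [hu, hv] <;> ring
        rw [Ideal.mem_span_singleton']
        refine ⟨⟨u, v⟩, mul_left_cancel₀ two0 ?_⟩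
        rw [this] at ht
        linear_combination -ht
      · rwa [Ideal.span_singleton_le_iff_mem]

lemma sup_pow_le' {S : Type*} [CommRing S] (A B : Ideal S) (n : ℕ) :
    (A ⊔ B) ^ n ≤ A ⊔ B ^ n := by
  induction n with
  | zero => simp
  | succ n ih =>
    rw [pow_succ, pow_succ]
    refine (mul_le_mul_left ih (A ⊔ B)).trans ?_
    rw [Ideal.sup_mul, Ideal.mul_sup (B ^ n)]
    refine sup_le ?_ (sup_le ?_ ?_)
    · exact (Ideal.mul_le_inf.trans inf_le_left).trans le_sup_left
    · exact (Ideal.mul_le_inf.trans inf_le_right).trans le_sup_left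
    · exact le_sup_right

lemma fifth (z w b : R) (hz : z ≠ 0) (hzw : z * w = b ^ 5) (hco : IsCoprime z w) :
    ∃ δ : R, Associated z (δ ^ 5) := by
  obtain ⟨I, hI⟩ : ∃ I : Ideal R, I = Ideal.span {z, b} := ⟨_, rfl⟩
  have hzI : z ∈ I := by rw [hI]; exact Ideal.subset_span (by simp)
  have hbI : b ∈ I := by rw [hI]; exact Ideal.subset_span (by simp)
  have hI0 : I ≠ ⊥ := by
    rintro h; rw [h] at hzI; exact hz (by simpa using hzI)
  have h5 : I ^ 5 = Ideal.span {z} := by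
    apply le_antisymm
    · have : I = Ideal.span {z} ⊔ Ideal.span {b} := by
        rw [hI, Ideal.span_insert]
      have hq : (Ideal.span {z} ⊔ Ideal.span {b}) ^ 5 ≤ Ideal.span {z} ⊔ Ideal.span {b} ^ 5 := by
        exact sup_pow_le' _ _ 5
      rw [this]
      refine hq.trans (sup_le le_rfl ?_)
      rw [Ideal.span_singleton_pow, Ideal.span_singleton_le_iff_mem, ← hzw]
      exact Ideal.mul_mem_right _ _ (Ideal.mem_span_singleton_self _)
    · rw [Ideal.span_singleton_le_iff_mem]
      obtain ⟨u, v, huv⟩ := hco.pow_left (m := 4)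
      have : z = u * z ^ 5 + v * b ^ 5 := by
        rw [← hzw]; linear_combination (-z) * huv
      rw [this]
      exact Ideal.add_mem _ (Ideal.mul_mem_left _ _ (Ideal.pow_mem_pow hzI 5))
        (Ideal.mul_mem_left _ _ (Ideal.pow_mem_pow hbI 5))
  obtain ⟨γ, hγ⟩ := sq_principal I hI0
  have h6 : Ideal.span {γ ^ 2} * I = Ideal.span {z} := by
    rw [← h5, ← Ideal.span_singleton_pow, ← hγ]; ring
  have hγ0 : γ ^ 2 ≠ 0 := by
    intro h
    have hm : z ∈ Ideal.span {γ ^ 2} * I := h6 ▸ Ideal.mem_span_singleton_self _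
    obtain ⟨y, -, hy⟩ := Ideal.mem_span_singleton_mul.1 hm
    rw [h, zero_mul] at hy
    exact hz hy.symm
  obtain ⟨δ, hδI, hδ⟩ : ∃ δ ∈ I, γ ^ 2 * δ = z := by
    have : z ∈ Ideal.span {γ ^ 2} * I := h6 ▸ Ideal.mem_span_singleton_self _
    exact Ideal.mem_span_singleton_mul.1 this
  have hIδ : I = Ideal.span {δ} := by
    apply le_antisymm
    · intro x hx
      have : γ ^ 2 * x ∈ Ideal.span {z} := by
        rw [← h6]; exact Ideal.mul_mem_mul (Ideal.mem_span_singleton_self _) hx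
      obtain ⟨t, ht⟩ := Ideal.mem_span_singleton'.1 this
      refine Ideal.mem_span_singleton'.2 ⟨t, mul_left_cancel₀ hγ0 ?_⟩
      rw [← ht, ← hδ]; ring
    · rwa [Ideal.span_singleton_le_iff_mem]
  refine ⟨δ, ?_⟩
  rw [← Ideal.span_singleton_eq_span_singleton, ← h5, hIδ, Ideal.span_singleton_pow]

lemma unit_pm (u : R) (hu : IsUnit u) : u = 1 ∨ u = -1 := by
  have h := (Zsqrtd.norm_eq_one_iff' (by norm_num : (-5 : ℤ) ≤ 0) u).2 hu
  rw [Zsqrtd.norm_def] at h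
  have h2 : u.im = 0 := by
    by_contra h0
    have : 0 < u.im * u.im := mul_self_pos.2 h0
    nlinarith [mul_self_nonneg u.re]
  rw [h2] at h
  have h3 : u.re * u.re = 1 := by linarith
  rcases mul_self_eq_one_iff.1 h3 with h4 | h4
  · left; ext <;> simp [h2, h4]
  · right; ext <;> simp [h2, h4]

lemma main (a b C : ℤ) (h : C ^ 2 + 5 * a ^ 2 = b ^ 5) (hb : Odd b) (hco : IsCoprime b C) :
    ∃ m n : ℤ, IsCoprime m n ∧ ¬ (Odd m ∧ Odd n) ∧
      a = 5 * n * (m ^ 4 - 10 * m ^ 2 * n ^ 2 + 5 * n ^ 4) ∧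
      C = m * (m ^ 4 - 50 * m ^ 2 * n ^ 2 + 125 * n ^ 4) := by
  have hzw : (⟨C, a⟩ : R) * ⟨C, -a⟩ = (b : R) ^ 5 := by
    have : (b : R) ^ 5 = ((b ^ 5 : ℤ) : R) := by push_cast; rfl
    rw [this, ← h]
    ext
    · rw [Zsqrtd.re_intCast, Zsqrtd.re_mul]; ring
    · rw [Zsqrtd.im_intCast, Zsqrtd.im_mul]; ring
  have hz : (⟨C, a⟩ : R) ≠ 0 := by
    intro h0
    have h1 := congrArg Zsqrtd.re h0
    have h2 := congrArg Zsqrtd.im h0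
    simp at h1 h2
    rw [h1, h2] at h
    have : b = 0 := by simpa using h.symm
    rw [this] at hb; simp at hb
  have hc2 : IsCoprime (b ^ 5) (2 * C) := by
    apply IsCoprime.pow_left
    apply IsCoprime.mul_right _ hco
    obtain ⟨k, hk⟩ := hb
    exact ⟨1, -k, by rw [hk]; ring⟩
  have hcz : IsCoprime (⟨C, a⟩ : R) ⟨C, -a⟩ := by
    obtain ⟨u, v, huv⟩ := hc2
    have h1 : (u : R) * (b : R) ^ 5 + v * (2 * C) = 1 := by exact_mod_cast congrArg (Int.cast : ℤ → R) huv
    have h2 : (2 * C : R) = ⟨C, a⟩ + ⟨C, -a⟩ := by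
      ext <;> simp; ring
    rw [← hzw, h2] at h1
    exact ⟨u * ⟨C, -a⟩ + v, v, by linear_combination h1⟩
  obtain ⟨δ, hδ⟩ := fifth _ _ _ hz hzw hcz
  obtain ⟨ε, hε⟩ : ∃ ε : R, ⟨C, a⟩ = ε ^ 5 := by
    obtain ⟨u, hu⟩ := hδ.symm
    rcases unit_pm _ u.isUnit with h1 | h1
    · exact ⟨δ, by rw [← hu, h1]; ring⟩
    · exact ⟨-δ, by rw [← hu, h1]; ring⟩
  obtain ⟨m, n⟩ := ε
  have hre := congrArg Zsqrtd.re hε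
  have him := congrArg Zsqrtd.im hε
  simp only [pow_succ, pow_zero, one_mul, Zsqrtd.re_mul, Zsqrtd.im_mul] at hre him
  have ha : a = 5 * n * (m ^ 4 - 10 * m ^ 2 * n ^ 2 + 5 * n ^ 4) := by rw [him]; ring
  have hC : C = m * (m ^ 4 - 50 * m ^ 2 * n ^ 2 + 125 * n ^ 4) := by rw [hre]; ring
  have hbn : b = m * m + 5 * n * n := by
    have : b ^ 5 = (m * m + 5 * n * n) ^ 5 := by rw [← h, ha, hC]; ring
    exact (Odd.strictMono_pow (by decide : Odd 5)).injective this
  refine ⟨m, n, ?_, ?_, ha, hC⟩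
  · have h1 : IsCoprime b m := by rw [hC] at hco; exact hco.of_mul_right_left
    obtain ⟨u, v, huv⟩ := h1
    exact ⟨u * m + v, u * 5 * n, by rw [hbn] at huv; linear_combination huv⟩
  · rintro ⟨h1, h2⟩
    rw [hbn] at hb
    have : Even (m * m + 5 * n * n) :=
      (h1.mul h1).add_odd (((by decide : Odd (5 : ℤ)).mul h2).mul h2)
    exact (Int.not_even_iff_odd.2 hb) this

end S2

theorem stmt_2 (p : ℕ) (hp : p.Prime) (hpodd : Odd p) (a b c : ℤ)
    (hgcd : Int.gcd (Int.gcd a b) c = 1)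
    (heq : -5 * a ^ 2 + b ^ 5 = c ^ (2 * p)) :
    Odd b ∧ ∃ m n : ℤ, IsCoprime m n ∧ ¬ (Odd m ∧ Odd n) ∧
      a = 5 * n * (m ^ 4 - 10 * m ^ 2 * n ^ 2 + 5 * n ^ 4) ∧
      c ^ p = m * (m ^ 4 - 50 * m ^ 2 * n ^ 2 + 125 * n ^ 4) ∧
      (5 : ℤ) ∣ a := by
  have h : (c ^ p) ^ 2 + 5 * a ^ 2 = b ^ 5 := by
    rw [← pow_mul, mul_comm p 2, ← heq]; ring
  have noprime : ∀ q : ℤ, Prime q → q ∣ a → q ∣ b → q ∣ c ^ p → False := by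
    intro q hq h1 h2 h3
    have h4 := hq.dvd_of_dvd_pow h3
    have h5 : q ∣ ((Int.gcd (Int.gcd a b) c : ℕ) : ℤ) :=
      Int.dvd_coe_gcd (Int.dvd_coe_gcd h1 h2) h4
    rw [hgcd] at h5
    exact hq.not_isUnit (isUnit_of_dvd_one (by simpa using h5))
  have hb : Odd b := by
    by_contra hb
    rw [Int.not_odd_iff_even] at hb
    obtain ⟨k, hk⟩ := hb
    have h8 : (c ^ p) ^ 2 + 5 * a ^ 2 = 8 * (4 * k ^ 5) := by rw [h, hk]; ring
    rcases Int.even_or_odd (c ^ p) with h1 | h1 <;> rcases Int.even_or_odd a with h2 | h2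
    · exact noprime 2 Int.prime_two h2.two_dvd ⟨k, by omega⟩ h1.two_dvd
    · obtain ⟨x, hx⟩ := h1
      obtain ⟨y, hy⟩ := h2
      rw [hx, hy] at h8; ring_nf at h8; omega
    · obtain ⟨x, hx⟩ := h1
      obtain ⟨y, hy⟩ := h2
      rw [hx, hy] at h8; ring_nf at h8; omega
    · have e1 := Int.sq_mod_four_eq_one_of_odd h1
      have e2 := Int.sq_mod_four_eq_one_of_odd h2
      omega
  have hco : IsCoprime b (c ^ p) := by
    apply isCoprime_of_prime_dvd
    · rintro ⟨h0, -⟩; rw [h0] at hb; simp at hb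
    · intro q hq h1 h2
      have hsq : q ^ 2 ∣ 5 * a ^ 2 := by
        have : 5 * a ^ 2 = b ^ 5 - (c ^ p) ^ 2 := by linarith
        rw [this]
        exact dvd_sub ((pow_dvd_pow q (by norm_num)).trans (pow_dvd_pow_of_dvd h1 5))
          (pow_dvd_pow_of_dvd h2 2)
      apply noprime q hq _ h1 h2
      rcases hq.dvd_or_dvd ((dvd_pow_self q two_ne_zero).trans hsq) with h5 | h5
      · have p5 : Prime (5 : ℤ) := by norm_num
        have has : Associated q 5 := hq.associated_of_dvd p5 h5
        have : (5 : ℤ) ^ 2 ∣ 5 * a ^ 2 := (has.pow_pow (n := 2)).symm.dvd.trans hsq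
        have : (5 : ℤ) ∣ a ^ 2 := by omega
        exact h5.trans (p5.dvd_of_dvd_pow this)
      · exact hq.dvd_of_dvd_pow h5
  obtain ⟨m, n, h1, h2, h3, h4⟩ := S2.main a b (c ^ p) h hb hco
  exact ⟨hb, m, n, h1, h2, h3, h4, ⟨n * (m ^ 4 - 10 * m ^ 2 * n ^ 2 + 5 * n ^ 4), by rw [h3]; ring⟩⟩
end

section
/- Let r ≥ 5 be a prime and q an odd prime, and let z, s be nonzero integers satisfying (I): v_q(z) = 1 and (II): v_q(s) ≥ (r+1)/2. Then the polynomial F(x) = (−z)^((r−1)/2)·x·h(2 − x²/z) + s is irreducible over the field ℚ_q of q-adic numbers if and only if q = r and v_r(s) = (r+1)/2. -/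
open Polynomial

/-- `h` is the minimal polynomial (over `ℤ`) of `ζ_r + ζ_r⁻¹`, where `ζ_r = exp(2πi/r)`
is a primitive `r`-th root of unity. -/
noncomputable def hpoly (r : ℕ) : Polynomial ℤ :=
  minpoly ℤ (Complex.exp (2 * Real.pi * Complex.I / (r : ℂ)) +
    (Complex.exp (2 * Real.pi * Complex.I / (r : ℂ)))⁻¹)

/-- The polynomial `F(x) = (-z)^((r-1)/2) · x · h(2 - x²/z) + s`, over a field `K`. -/
noncomputable def Fpoly (r : ℕ) (z s : ℤ) (K : Type*) [Field K] : Polynomial K :=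
  C ((((-z) ^ ((r - 1) / 2) : ℤ) : K)) * X *
    (((hpoly r).map (Int.castRingHom K)).comp (C 2 - C ((z : K))⁻¹ * X ^ 2)) + C ((s : K))

noncomputable def Hp : ℕ → ℤ[X]
  | 0 => 1
  | 1 => X + 1
  | (n+2) => X * Hp (n+1) - Hp n

lemma Hp_monic (n : ℕ) : (Hp n).Monic ∧ (Hp n).natDegree = n ∧ (Hp (n+1)).Monic ∧ (Hp (n+1)).natDegree = n+1 := by
  induction n with
  | zero =>
    have : (X + 1 : ℤ[X]) = X + C 1 := by simp
    refine ⟨by simp [Hp], by simp [Hp], ?_, ?_⟩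
    · simp only [Hp, this]; exact monic_X_add_C 1
    · simp only [Hp, this]; exact natDegree_X_add_C 1
  | succ n ih =>
    obtain ⟨h1, h2, h3, h4⟩ := ih
    have hm : (X * Hp (n+1)).Monic := monic_X.mul h3
    have hd : (X * Hp (n+1)).natDegree = n + 2 := by
      rw [monic_X.natDegree_mul h3, natDegree_X, h4]; ring
    have hlt : (Hp n).degree < (X * Hp (n+1)).degree := by
      rw [degree_eq_natDegree h1.ne_zero, degree_eq_natDegree hm.ne_zero, hd, h2]
      exact_mod_cast (by omega : n < n + 2)
    refine ⟨h3, h4, ?_, ?_⟩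
    · exact hm.sub_of_left hlt
    · change (X * Hp (n+1) - Hp n).natDegree = _
      rw [natDegree_sub_eq_left_of_natDegree_lt, hd]
      rw [hd, h2]; omega

lemma Hp_eval {R : Type*} [CommRing R] (u v : R) (huv : u * v = 1) (n : ℕ) :
    u ^ n * eval₂ (Int.castRingHom R) (u + v) (Hp n) = ∑ i ∈ Finset.range (2 * n + 1), u ^ i ∧
    u ^ (n+1) * eval₂ (Int.castRingHom R) (u + v) (Hp (n+1)) = ∑ i ∈ Finset.range (2 * (n+1) + 1), u ^ i := by
  induction n with
  | zero =>
    simp only [Hp, eval₂_add, eval₂_X, eval₂_one]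
    refine ⟨by simp, ?_⟩
    norm_num [Finset.sum_range_succ]
    linear_combination huv
  | succ n ih =>
    refine ⟨ih.2, ?_⟩
    obtain ⟨h1, h2⟩ := ih
    simp only [Hp, eval₂_sub, eval₂_mul, eval₂_X]
    rw [show 2 * (n+1) + 1 = 2 * n + 1 + 1 + 1 by ring] at h2
    rw [show 2 * (n+1+1) + 1 = 2 * n + 1 + 1 + 1 + 1 + 1 by ring]
    simp only [Finset.sum_range_succ _ (2 * n + 1 + 1 + 1 + 1), Finset.sum_range_succ _ (2 * n + 1 + 1 + 1)]
    have e : ∑ i ∈ Finset.range (2 * n + 1 + 1 + 1), u ^ i = ∑ i ∈ Finset.range (2 * n + 1), u ^ i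
      + u ^ (2*n+1) + u ^ (2*n+2) := by
      simp only [Finset.sum_range_succ]
    have e2 : ∑ i ∈ Finset.range (2 * n + 1), u ^ i * (u - 1) = u ^ (2*n+1) - 1 := by
      rw [← Finset.sum_mul, geom_sum_mul]
    rw [← Finset.sum_mul] at e2
    rw [e] at h2 ⊢
    generalize ∑ i ∈ Finset.range (2 * n + 1), u ^ i = S at *
    generalize eval₂ (Int.castRingHom R) (u + v) (Hp (n+1)) = A at *
    generalize eval₂ (Int.castRingHom R) (u + v) (Hp n) = B at *
    have : u ^ (n+1+1) * ((u+v) * A - B) = (u^2 + u * v) * (u^(n+1) * A) - u^2 * (u^n * B) := by ring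
    rw [this, h1, h2, huv]
    ring

lemma Hp_two (n : ℕ) : (Hp n).eval 2 = 2 * n + 1 := by
  have := (Hp_eval (1:ℤ) 1 (by simp) n).1
  norm_num at this
  rw [← this]

lemma Hp_key {K : Type*} [Field K] [IsAlgClosed K] (d r : ℕ) [Fact r.Prime] [CharP K r]
    (hd : d ≠ 0) (hr : r = 2*d+1) (x : K) :
    eval₂ (Int.castRingHom K) x (Hp d) = (x - 2) ^ d := by
  obtain ⟨u, hu⟩ := IsAlgClosed.exists_root (C 1 * X ^ 2 + C (-x) * X + C (1:K)) (by
    rw [degree_quadratic one_ne_zero]; norm_num)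
  simp [IsRoot] at hu
  have hx : u * (x - u) = 1 := by linear_combination -hu
  have h := (Hp_eval u (x-u) hx d).1
  rw [← hr] at h
  have hu0 : u ≠ 0 := left_ne_zero_of_mul_eq_one hx
  rw [show u + (x - u) = x by ring] at h
  by_cases h1 : u = 1
  · subst h1
    have : x = 2 := by linear_combination hx
    subst this
    rw [one_pow, one_mul] at h
    rw [h]
    simp [hd]
  · have h2 : u ^ d * eval₂ (Int.castRingHom K) x (Hp d) * (u - 1) = (u-1)^r := by
      rw [h, geom_sum_mul, sub_pow_char u 1, one_pow]
    have h3 : u ^ d * eval₂ (Int.castRingHom K) x (Hp d) = u ^ d * (x - 2) ^ d := by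
      apply mul_right_cancel₀ (sub_ne_zero.2 h1)
      rw [h2, ← mul_pow, hr, pow_succ, pow_mul]
      congr 2
      linear_combination hu
    exact mul_left_cancel₀ (pow_ne_zero _ hu0) h3

lemma Hp_mod (d r : ℕ) [Fact r.Prime] (hd : d ≠ 0) (hr : r = 2*d+1) :
    (Hp d).map (Int.castRingHom (ZMod r)) = (X - 2) ^ d := by
  have inj := Polynomial.map_injective (algebraMap (ZMod r) (AlgebraicClosure (ZMod r)))
    (algebraMap (ZMod r) _).injective
  have : CharP (AlgebraicClosure (ZMod r)) r := charP_of_injective_algebraMap (algebraMap (ZMod r) _).injective r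
  have : Infinite (AlgebraicClosure (ZMod r)) := IsAlgClosed.instInfinite
  apply inj
  apply Polynomial.funext
  intro x
  rw [Polynomial.map_map, eval_map]
  have e := Hp_key d r hd hr x
  rw [RingHom.ext_int ((algebraMap (ZMod r) (AlgebraicClosure (ZMod r))).comp (Int.castRingHom (ZMod r))) (Int.castRingHom _), e]
  simp

/-- shifted polynomial `(-1)^d H_d (2 - X)` -/
noncomputable def Pp (d : ℕ) : ℤ[X] := C ((-1)^d) * (Hp d).comp (C 2 - X)

lemma two_sub_natDegree : (C 2 - X : ℤ[X]).natDegree = 1 := by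
  rw [show (C 2 - X : ℤ[X]) = - (X - C 2) by ring, natDegree_neg, natDegree_X_sub_C]

lemma Pp_natDegree (d : ℕ) : (Pp d).natDegree = d := by
  rw [Pp, natDegree_C_mul (by simp), natDegree_comp, two_sub_natDegree, (Hp_monic d).2.1, mul_one]

lemma Pp_monic (d : ℕ) : (Pp d).Monic := by
  rw [Monic, Pp, leadingCoeff_mul, leadingCoeff_comp (by rw [two_sub_natDegree]; simp),
    (Hp_monic d).1, (Hp_monic d).2.1,
    show (C 2 - X : ℤ[X]) = - (X - C 2) by ring, leadingCoeff_neg, leadingCoeff_X_sub_C, leadingCoeff_C,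
    one_mul, ← mul_pow]
  simp

lemma Pp_zero (d : ℕ) : (Pp d).coeff 0 = (-1)^d * (2 * d + 1) := by
  rw [coeff_zero_eq_eval_zero, Pp, eval_mul, eval_C, eval_comp]
  simp [Hp_two]

lemma Pp_dvd (d r : ℕ) [Fact r.Prime] (hd : d ≠ 0) (hr : r = 2*d+1) (k : ℕ) (hk : k < d) :
    (r : ℤ) ∣ (Pp d).coeff k := by
  rw [← ZMod.intCast_zmod_eq_zero_iff_dvd]
  have : (Pp d).map (Int.castRingHom (ZMod r)) = X ^ d := by
    rw [Pp, Polynomial.map_mul, Polynomial.map_comp, Hp_mod d r hd hr]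
    simp
    rw [← mul_pow]; ring
  have h2 := congrArg (fun p => coeff p k) this
  simpa [coeff_X_pow, hk.ne] using h2

lemma Hp_of_Pp (d : ℕ) : (Hp d) = C ((-1)^d) * (Pp d).comp (C 2 - X) := by
  rw [Pp, mul_comp, C_comp, comp_assoc, ← mul_assoc, ← C_mul, ← mul_pow]
  simp

lemma Pp_irr (d r : ℕ) [hp : Fact r.Prime] (hd : d ≠ 0) (hr : r = 2*d+1) : Irreducible (Pp d) := by
  have hP : (Ideal.span {(r:ℤ)}).IsPrime :=
    (Ideal.span_singleton_prime (by exact_mod_cast hp.out.ne_zero)).2 (Nat.prime_iff_prime_int.1 hp.out)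
  refine IsEisensteinAt.irreducible (𝓟 := Ideal.span {(r:ℤ)}) ⟨?_, ?_, ?_⟩ hP (Pp_monic d).isPrimitive ?_
  · rw [Pp_monic d]; exact fun h => hP.ne_top ((Ideal.eq_top_iff_one _).2 h)
  · intro n hn
    rw [Pp_natDegree] at hn
    rw [Ideal.mem_span_singleton]
    exact Pp_dvd d r hd hr n hn
  · rw [Ideal.span_singleton_pow, Ideal.mem_span_singleton, Pp_zero]
    have : (2 * (d:ℤ) + 1) = r := by rw [hr]; push_cast; ring
    rw [this, (isUnit_one.neg.pow d).dvd_mul_left]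
    have h0 : (r : ℤ) ≠ 0 := by exact_mod_cast hp.out.ne_zero
    intro h
    rw [pow_two] at h
    have := (mul_dvd_mul_iff_left h0).1 (by simpa using h : (r:ℤ) * r ∣ r * 1)
    have h3 := Nat.prime_iff_prime_int.1 hp.out
    exact h3.not_isUnit (isUnit_of_dvd_one this)
  · rw [Pp_natDegree]; omega

lemma Hp_irr (d r : ℕ) [hp : Fact r.Prime] (hd : d ≠ 0) (hr : r = 2*d+1) : Irreducible (Hp d) := by
  have h := Pp_irr d r hd hr
  rw [Pp, irreducible_isUnit_mul ((isUnit_one.neg.pow d).map C)] at h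
  have e : (C 2 - X : ℤ[X]).comp (C 2 - X) = X := by simp
  have := MulEquiv.irreducible_iff (algEquivOfCompEqX (C 2 - X : ℤ[X]) (C 2 - X) e e) (x := Hp d)
  rw [← this]
  convert h using 1
  rw [algEquivOfCompEqX_apply]
  rfl

lemma hpoly_eq (d r : ℕ) [hp : Fact r.Prime] (hd : d ≠ 0) (hr : r = 2*d+1) : hpoly r = Hp d := by
  have hz := Complex.isPrimitiveRoot_exp r hp.out.ne_zero
  rw [hpoly]
  set u := Complex.exp (2 * Real.pi * Complex.I / (r : ℂ))
  have hu : u ≠ 0 := hz.ne_zero hp.out.ne_zero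
  have h := (Hp_eval u u⁻¹ (mul_inv_cancel₀ hu) d).1
  rw [← hr, hz.geom_sum_eq_zero hp.out.one_lt] at h
  have h0 : aeval (u + u⁻¹) (Hp d) = 0 := by
    rw [aeval_def]
    exact (mul_eq_zero.1 h).resolve_left (pow_ne_zero _ hu)
  have hi : IsIntegral ℤ (u + u⁻¹) := ⟨Hp d, (Hp_monic d).1, h0⟩
  have hdvd := minpoly.isIntegrallyClosed_dvd hi h0
  have := (Hp_irr d r hd hr).dvd_iff.1 hdvd
  rcases this with h | h
  · exact absurd h (minpoly.not_isUnit _ _)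
  · exact (eq_of_monic_of_associated (Hp_monic d).1 (minpoly.monic hi) h).symm

noncomputable def Gpoly (d : ℕ) (z : ℤ) (K : Type*) [Field K] : K[X] :=
  C ((z : K) ^ d) * ((Pp d).map (Int.castRingHom K)).comp (C (z : K)⁻¹ * X ^ 2)

lemma Fpoly_eq (d r : ℕ) [hp : Fact r.Prime] (hd : d ≠ 0) (hr : r = 2*d+1) (z s : ℤ)
    (K : Type*) [Field K] : Fpoly r z s K = X * Gpoly d z K + C (s : K) := by
  have e : (r - 1) / 2 = d := by omega
  rw [Fpoly, hpoly_eq d r hd hr, e, Hp_of_Pp, Polynomial.map_mul, Polynomial.map_comp, mul_comp, comp_assoc, Gpoly]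
  have e1 : ((C 2 - X : ℤ[X]).map (Int.castRingHom K)).comp (C 2 - C (z:K)⁻¹ * X^2) = C (z:K)⁻¹ * X^2 := by
    rw [Polynomial.map_sub, map_C, map_X, sub_comp, C_comp, X_comp]
    simp only [eq_intCast, Int.cast_ofNat]
    ring
  have e2 : C ((((-z) ^ d : ℤ)) : K) * C ((Int.castRingHom K) ((-1)^d)) = C ((z:K)^d) := by
    rw [← C_mul]
    congr 1
    simp only [eq_intCast, Int.cast_pow, Int.cast_neg, Int.cast_one]
    rw [← mul_pow]
    ring
  rw [e1, map_C, C_comp, ← e2]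
  ring

lemma Gpoly_natDegree (d : ℕ) (z : ℤ) (K : Type*) [Field K] (hz : (z:K) ≠ 0) :
    (Gpoly d z K).natDegree = 2 * d := by
  rw [Gpoly, natDegree_C_mul (pow_ne_zero _ hz), natDegree_comp, (Pp_monic d).natDegree_map, Pp_natDegree,
    natDegree_C_mul_X_pow _ _ (inv_ne_zero hz), mul_comm]

lemma Fpoly_natDegree (d r : ℕ) [hp : Fact r.Prime] (hd : d ≠ 0) (hr : r = 2*d+1) (z s : ℤ)
    (K : Type*) [Field K] (hz : (z:K) ≠ 0) : (Fpoly r z s K).natDegree = r := by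
  have hG := Gpoly_natDegree d z K hz
  have hG0 : Gpoly d z K ≠ 0 := by
    intro h; rw [h] at hG; simp at hG; omega
  rw [Fpoly_eq d r hd hr, natDegree_add_C, natDegree_X_mul hG0, hG, hr]

lemma hens (q : ℕ) [Fact q.Prime] (ε s : ℤ_[q]) (hε : IsUnit ε) (B : ℤ_[q][X]) :
    ∃ y : ℤ_[q], y * (ε + q * B.eval y) + s = 0 := by
  obtain ⟨η, hη⟩ := hε.exists_right_inv
  have hlt : ∀ t : ℤ_[q], ‖(q : ℤ_[q]) * t‖ < 1 := fun t => by
    rw [PadicInt.norm_lt_one_iff_dvd]; exact dvd_mul_right _ _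
  have key := hensels_lemma (p := q) (F := X * (C ε + C (q:ℤ_[q]) * B) + C s) (a := - s * η) ?_
  · obtain ⟨y, hy, -⟩ := key
    exact ⟨y, by simpa using hy⟩
  · have h1 : aeval (-s * η) (X * (C ε + C (q:ℤ_[q]) * B) + C s) = q * (- s * η * B.eval (-s * η)) := by
      simp only [coe_aeval_eq_eval, eval_add, eval_mul, eval_X, eval_C]
      linear_combination -s * hη
    have h2 : ∃ t, aeval (-s * η) (derivative (X * (C ε + C (q:ℤ_[q]) * B) + C s)) = ε + q * t := by
      refine ⟨B.eval (-s * η) + (-s * η) * (derivative B).eval (-s * η), ?_⟩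
      simp only [coe_aeval_eq_eval, derivative_add, derivative_mul, derivative_C, derivative_X, eval_add, eval_mul, eval_X, eval_C, eval_one, eval_zero]
      ring
    obtain ⟨t, h2⟩ := h2
    rw [h1, h2]
    have h3 : ‖ε + q * t‖ = 1 := by
      rw [PadicInt.isUnit_iff] at hε
      rw [IsUltrametricDist.norm_add_eq_max_of_norm_ne_norm, hε]
      · exact max_eq_left (hlt t).le
      · rw [hε]; exact (hlt t).ne'
    rw [h3, one_pow]
    exact hlt _

lemma root_of (q d : ℕ) [Fact q.Prime] (z s : ℤ) (hz : (z : ℤ_[q]) ≠ 0)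
    (w ε s' : ℤ_[q]) (hε : IsUnit ε) (B : ℤ_[q][X])
    (hB : ∀ y : ℤ_[q], eval₂ (Int.castRingHom ℤ_[q]) (z * y^2) (Pp d) = w * (ε + q * B.eval y))
    (hs : (s : ℤ_[q]) = z ^ (d+1) * w * s') :
    ∃ x : ℚ_[q], (X * Gpoly d z ℚ_[q] + C (s : ℚ_[q])).IsRoot x := by
  obtain ⟨y, hy⟩ := hens q ε s' hε B
  have hzK : (z : ℚ_[q]) ≠ 0 := by
    intro h; apply hz; exact_mod_cast h
  refine ⟨z * y, ?_⟩
  have e : eval₂ (Int.castRingHom ℚ_[q]) ((z:ℚ_[q]) * y^2) (Pp d) = ((w * (ε + q * B.eval y) : ℤ_[q]) : ℚ_[q]) := by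
    rw [← hB y]
    have := hom_eval₂ (Pp d) (Int.castRingHom ℤ_[q]) (PadicInt.Coe.ringHom (p := q)) (z * y^2)
    rw [RingHom.ext_int ((PadicInt.Coe.ringHom (p := q)).comp (Int.castRingHom ℤ_[q])) (Int.castRingHom _)] at this
    have e2 : PadicInt.Coe.ringHom (p := q) ((z : ℤ_[q]) * y^2) = (z:ℚ_[q]) * y^2 := by
      rw [map_mul, map_pow, map_intCast]; rfl
    rw [e2] at this
    rw [← this]; rfl
  rw [IsRoot.def, eval_add, eval_mul, eval_X, eval_C, Gpoly, eval_mul, eval_C, eval_comp, eval_map]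
  simp only [eval_mul, eval_C, eval_pow, eval_X]
  rw [show (z:ℚ_[q])⁻¹ * (z * y)^2 = z * y^2 by field_simp, e]
  have hs' : (s : ℚ_[q]) = ((z ^ (d+1) * w * s' : ℤ_[q]) : ℚ_[q]) := by rw [← hs]; simp
  have hy' : (((y * (ε + q * B.eval y) + s') : ℤ_[q]) : ℚ_[q]) = 0 := by rw [hy]; simp
  rw [hs']
  push_cast at hy' ⊢
  linear_combination (z:ℚ_[q])^(d+1) * w * hy'

lemma case_ne (q r d : ℕ) [hqp : Fact q.Prime] [hp : Fact r.Prime] (hr : r = 2*d+1) (hqr : q ≠ r)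
    (u : ℤ_[q]) (z : ℤ) (hzu : (z : ℤ_[q]) = q * u) :
    ∃ ε : ℤ_[q], IsUnit ε ∧ ∃ B : ℤ_[q][X], 
    ∀ y : ℤ_[q], eval₂ (Int.castRingHom ℤ_[q]) (z * y^2) (Pp d) = 1 * (ε + q * B.eval y) := by
  refine ⟨(((Pp d).coeff 0 : ℤ) : ℤ_[q]), ?_,
    C u * X^2 * ((Pp d).divX.map (Int.castRingHom ℤ_[q])).comp (C (z:ℤ_[q]) * X^2), fun y => ?_⟩
  · rw [Pp_zero, show (2 * (d:ℤ) + 1) = (r:ℤ) by rw [hr]; push_cast; ring]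
    push_cast
    refine (isUnit_one.neg.pow d).mul ?_
    have h : IsUnit (((r : ℤ)) : ℤ_[q]) := by
      rw [PadicInt.isUnit_iff]
      rw [PadicInt.norm_intCast_eq_one_iff]
      exact_mod_cast ((Nat.coprime_primes hp.out hqp.out).2 (Ne.symm hqr))
    simpa using h
  · conv_lhs => rw [← divX_mul_X_add (Pp d)]
    rw [eval₂_add, eval₂_C]
    simp only [eval₂_mul, eval₂_X, eval_mul, eval_C, eval_pow, eval_X, eval_comp, eval_map, eq_intCast]
    rw [hzu]
    ring

lemma case_eq (r d : ℕ) [hp : Fact r.Prime] (hd : 2 ≤ d) (hr : r = 2*d+1)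
    (u : ℤ_[r]) (z : ℤ) (hzu : (z : ℤ_[r]) = r * u) :
    ∃ ε : ℤ_[r], IsUnit ε ∧ ∃ B : ℤ_[r][X], 
    ∀ y : ℤ_[r], eval₂ (Int.castRingHom ℤ_[r]) (z * y^2) (Pp d) = r * (ε + r * B.eval y) := by
  obtain ⟨e, rfl⟩ : ∃ e, d = e + 2 := ⟨d - 2, by omega⟩
  have h : C (r:ℤ) ∣ (Pp (e+2)).divX - X^(e+1) := by
    rw [C_dvd_iff_dvd_coeff]
    intro i
    rw [coeff_sub, coeff_divX, coeff_X_pow]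
    rcases lt_trichotomy i (e+1) with hi | hi | hi
    · rw [if_neg hi.ne, sub_zero]; exact Pp_dvd (e+2) r (by omega) hr _ (by omega)
    · have := Pp_monic (e+2)
      rw [Monic, leadingCoeff, Pp_natDegree] at this
      rw [if_pos hi, hi, this]; simp
    · rw [if_neg hi.ne', coeff_eq_zero_of_natDegree_lt (by rw [Pp_natDegree]; omega)]; simp
  obtain ⟨A, hA⟩ := h
  refine ⟨(-1)^(e+2), isUnit_one.neg.pow _,
    C u * X^2 * ((A.map (Int.castRingHom ℤ_[r])).comp (C (z:ℤ_[r]) * X^2) + C u * X^2 * (C (z:ℤ_[r]) * X^2)^e), fun y => ?_⟩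
  conv_lhs => rw [← divX_mul_X_add (Pp (e+2)), sub_eq_iff_eq_add.1 hA]
  rw [Pp_zero, show (2 * ((e+2 : ℕ):ℤ) + 1) = (r:ℤ) by rw [hr]; push_cast; ring]
  rw [eval₂_add, eval₂_C, eval₂_mul, eval₂_add, eval₂_mul, eval₂_C]
  simp only [eval₂_pow, eval₂_X, eval_mul, eval_C, eval_pow, eval_X, eval_comp, eval_map, eq_intCast, eval_add]
  rw [hzu]
  push_cast
  ring

lemma val_spec (q : ℕ) [Fact q.Prime] (x : ℤ) (hx : x ≠ 0) :
    ∃ n : ℕ, ((x : ℚ_[q])).valuation = n ∧ ∃ u : ℤ_[q], IsUnit u ∧ (x : ℤ_[q]) = q ^ n * u := by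
  have h0 : (x : ℤ_[q]) ≠ 0 := by exact_mod_cast hx
  refine ⟨(x : ℤ_[q]).valuation, ?_, _, (PadicInt.unitCoeff h0).isUnit, ?_⟩
  · rw [← PadicInt.valuation_coe]; simp
  · rw [mul_comm]; exact PadicInt.unitCoeff_spec h0

lemma fld1 {L : Type*} [Field L] (a r u z : L) (hr : r ≠ 0) (hu : u ≠ 0) (hz : z = r * u) :
    a^2 / r = u * (z⁻¹ * a^2) := by
  rw [hz]; field_simp

lemma fld2 {L : Type*} [Field L] (a r T v : L) (hr : r ≠ 0) (h : a * T = - (r * v)) :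
    a^2 / r * T^2 - r * v^2 = 0 := by
  have : a^2 / r * T^2 = (a*T)^2 / r := by ring
  rw [this, h]
  field_simp
  ring

lemma irr_case (r d : ℕ) [hp : Fact r.Prime] (hd : d ≠ 0) (hr : r = 2*d+1) (z s : ℤ) (hz0 : z ≠ 0)
    (u v : ℤ_[r]) (hu : IsUnit u) (hv : IsUnit v) (hzu : (z : ℤ_[r]) = r * u) (hsv : (s : ℤ_[r]) = r ^ (d+1) * v) :
    Irreducible (Fpoly r z s ℚ_[r]) := by
  set p1 : ℤ_[r][X] := ((Pp d).map (Int.castRingHom ℤ_[r])).scaleRoots u with hp1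
  have hm : p1.Monic := (monic_scaleRoots_iff u).2 ((Pp_monic d).map _)
  have hdeg : p1.natDegree = d := by
    rw [hp1, natDegree_scaleRoots, (Pp_monic d).natDegree_map, Pp_natDegree]
  have hc : ∀ k < d, (r : ℤ_[r]) ∣ p1.coeff k := by
    intro k hk
    rw [hp1, coeff_scaleRoots, coeff_map]
    obtain ⟨c, hc⟩ := Pp_dvd d r hd hr k hk
    rw [hc]
    simp [mul_assoc]
  set E : ℤ_[r][X] := X * p1^2 - C (r * v^2) with hE
  have hXm : (X * p1^2).Monic := monic_X.mul (hm.pow 2)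
  have hXd : (X * p1^2).natDegree = r := by
    rw [monic_X.natDegree_mul (hm.pow 2), hm.natDegree_pow, hdeg, natDegree_X, hr]; ring
  have hEd : E.natDegree = r := by rw [hE, natDegree_sub_C, hXd]
  have hEm : E.Monic := by
    apply hXm.sub_of_left
    rw [degree_eq_natDegree hXm.ne_zero, hXd]
    exact lt_of_le_of_lt degree_C_le (by exact_mod_cast hp.out.pos)
  have hrp : Prime (r : ℤ_[r]) := PadicInt.prime_p
  have hP : (Ideal.span {(r:ℤ_[r])}).IsPrime :=
    (Ideal.span_singleton_prime hrp.ne_zero).2 hrp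
  have hp1X : C (r : ℤ_[r]) ∣ p1 - X^d := by
    rw [C_dvd_iff_dvd_coeff]
    intro i
    rw [coeff_sub, coeff_X_pow]
    rcases lt_trichotomy i d with hi | hi | hi
    · rw [if_neg hi.ne, sub_zero]; exact hc _ hi
    · rw [Monic, leadingCoeff, hdeg] at hm
      rw [if_pos hi, hi, hm]; simp
    · rw [if_neg hi.ne', coeff_eq_zero_of_natDegree_lt (by rw [hdeg]; omega)]; simp
  have hEX : C (r : ℤ_[r]) ∣ E - X^r := by
    obtain ⟨A, hA⟩ := hp1X
    refine ⟨X * A * (p1 + X^d) - C (v^2), ?_⟩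
    have : (X : ℤ_[r][X])^r = X * (X^d)^2 := by
      rw [← pow_mul, ← pow_succ']; congr 1; omega
    rw [hE, this, C_mul]
    linear_combination X * (p1 + X^d) * hA
  have hEirr : Irreducible E := by
    refine IsEisensteinAt.irreducible (𝓟 := Ideal.span {(r:ℤ_[r])}) ⟨?_, ?_, ?_⟩ hP hEm.isPrimitive ?_
    · rw [hEm]; exact fun h => hP.ne_top ((Ideal.eq_top_iff_one _).2 h)
    · intro n hn
      rw [hEd] at hn
      rw [Ideal.mem_span_singleton]
      have := (C_dvd_iff_dvd_coeff _ _).1 hEX n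
      rwa [coeff_sub, coeff_X_pow, if_neg hn.ne, sub_zero] at this
    · rw [Ideal.span_singleton_pow, Ideal.mem_span_singleton, hE]
      simp only [coeff_sub, mul_coeff_zero, coeff_X_zero, zero_mul, coeff_C_zero, zero_sub, dvd_neg]
      rw [(hv.pow 2).dvd_mul_right]
      intro h
      rw [pow_two] at h
      have := (mul_dvd_mul_iff_left hrp.ne_zero).1 (by simpa using h : (r:ℤ_[r]) * r ∣ r * 1)
      exact hrp.not_isUnit (isUnit_of_dvd_one this)
    · rw [hEd]; exact hp.out.pos
  have hEirr' := (hEm.irreducible_iff_irreducible_map_fraction_map (K := ℚ_[r])).1 hEirr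
  set EK := E.map (algebraMap ℤ_[r] ℚ_[r]) with hEK
  have hzK : (z : ℚ_[r]) ≠ 0 := by exact_mod_cast hz0
  have hFd := Fpoly_natDegree d r hd hr z s ℚ_[r] hzK
  have hF0 : Fpoly r z s ℚ_[r] ≠ 0 := by
    intro h; rw [h] at hFd; simp at hFd; omega
  let L := AlgebraicClosure ℚ_[r]
  obtain ⟨α, hα⟩ := IsAlgClosed.exists_aeval_eq_zero L (Fpoly r z s ℚ_[r]) (by
    rw [degree_eq_natDegree hF0, hFd]; exact_mod_cast hp.out.ne_zero)
  have hαi : IsIntegral ℚ_[r] α := Algebra.IsIntegral.isIntegral α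
  have hrL : (r : L) ≠ 0 := by
    have : ((r : ℚ_[r])) ≠ 0 := by exact_mod_cast hp.out.ne_zero
    intro h
    apply this
    apply (algebraMap ℚ_[r] L).injective
    simpa using h
  have hzL : (z : L) ≠ 0 := by
    intro h
    apply hzK
    apply (algebraMap ℚ_[r] L).injective
    simpa using h
  let φ : ℤ_[r] →+* L := (algebraMap ℚ_[r] L).comp (algebraMap ℤ_[r] ℚ_[r])
  have hφz : (z : L) = r * φ u := by
    have := congrArg φ hzu
    simpa using this
  have hφs : (s : L) = r ^ (d+1) * φ v := by
    have := congrArg φ hsv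
    simpa using this
  have hφu : φ u ≠ 0 := by
    intro h; rw [h, mul_zero] at hφz; exact hzL hφz
  have hα' : α * ((z:L)^d * eval₂ (Int.castRingHom L) ((z:L)⁻¹ * α^2) (Pp d)) + s = 0 := by
    rw [Fpoly_eq d r hd hr, Gpoly] at hα
    rw [aeval_def, eval₂_add, eval₂_mul, eval₂_X, eval₂_C, eval₂_mul, eval₂_C, eval₂_comp, eval₂_map] at hα
    rw [RingHom.ext_int ((algebraMap ℚ_[r] L).comp (Int.castRingHom ℚ_[r])) (Int.castRingHom _)] at hα
    simpa using hα
  have hβ : aeval (α^2 / r) EK = 0 := by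
    rw [hEK, aeval_def, eval₂_map]
    change eval₂ φ _ _ = 0
    have e1 : α^2 / (r:L) = φ u * ((z:L)⁻¹ * α^2) := by
      exact fld1 _ _ _ _ hrL hφu hφz
    have e2 : eval₂ φ (α^2 / r) p1 = φ u ^ d * eval₂ (Int.castRingHom L) ((z:L)⁻¹ * α^2) (Pp d) := by
      rw [e1, hp1, scaleRoots_eval₂_mul, eval₂_map, (Pp_monic d).natDegree_map, Pp_natDegree]
      rw [RingHom.ext_int (φ.comp (Int.castRingHom ℤ_[r])) (Int.castRingHom _)]
    rw [hE, eval₂_sub, eval₂_mul, eval₂_X, eval₂_pow, eval₂_C, e2]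
    generalize eval₂ (Int.castRingHom L) ((z:L)⁻¹ * α^2) (Pp d) = T at *
    have e3 : α * (r^d * φ u ^ d * T) = - (r^(d+1) * φ v) := by
      rw [hφz, hφs, mul_pow] at hα'
      linear_combination hα'
    have e4 : α * (φ u ^ d * T) = - (r * φ v) := by
      apply mul_left_cancel₀ (pow_ne_zero d hrL)
      linear_combination e3
    simp only [map_mul, map_pow, map_natCast]
    exact fld2 _ _ _ _ hrL e4
  have hmin : (minpoly ℚ_[r] (α^2 / (r:L))).natDegree = r := by
    have h1 := minpoly.eq_of_irreducible_of_monic hEirr' hβ (hEm.map _)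
    rw [← h1, hEm.natDegree_map, hEd]
  have hle : r ≤ (minpoly ℚ_[r] α).natDegree := by
    have hmem : α^2 / (r:L) ∈ IntermediateField.adjoin ℚ_[r] {α} := by
      have h1 := IntermediateField.mem_adjoin_simple_self ℚ_[r] α
      exact div_mem (pow_mem h1 2) (natCast_mem _ r)
    have : FiniteDimensional ℚ_[r] (IntermediateField.adjoin ℚ_[r] {α}) := IntermediateField.adjoin.finiteDimensional hαi
    have h2 := minpoly.natDegree_le (A := ℚ_[r]) (⟨_, hmem⟩ : IntermediateField.adjoin ℚ_[r] {α})
    rw [IntermediateField.adjoin.finrank hαi] at h2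
    rw [IntermediateField.minpoly_eq] at h2
    exact hmin.symm.le.trans h2
  have hdvd := minpoly.dvd ℚ_[r] α hα
  have hass := associated_of_dvd_of_natDegree_le hdvd hF0 (by rw [hFd]; exact hle)
  exact hass.irreducible (minpoly.irreducible hαi)

theorem stmt_3 (r q : ℕ) [Fact r.Prime] [Fact q.Prime] (hr : 5 ≤ r) (hq : Odd q)
    (z s : ℤ) (hz0 : z ≠ 0) (hs0 : s ≠ 0)
    (hz : ((z : ℚ_[q])).valuation = 1)
    (hs : (r : ℤ) + 1 ≤ 2 * ((s : ℚ_[q])).valuation) :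
    Irreducible (Fpoly r z s ℚ_[q]) ↔
      (q = r ∧ 2 * ((s : ℚ_[q])).valuation = (r : ℤ) + 1) := by
  have hrp : r.Prime := Fact.out
  obtain ⟨d, hd⟩ : ∃ d, r = 2 * d + 1 := hrp.odd_of_ne_two (by omega)
  have hd2 : 2 ≤ d := by omega
  obtain ⟨m, hm, u, hu, hzu⟩ := val_spec q z hz0
  obtain ⟨n, hn, v, hv, hsv⟩ := val_spec q s hs0
  have hm1 : m = 1 := by rw [hm] at hz; exact_mod_cast hz
  subst hm1
  rw [pow_one] at hzu
  rw [hn] at hs ⊢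
  have hn' : d + 1 ≤ n := by omega
  have hzZ : (z : ℤ_[q]) ≠ 0 := by exact_mod_cast hz0
  have hzK : (z : ℚ_[q]) ≠ 0 := by exact_mod_cast hz0
  obtain ⟨u', hu'⟩ := hu.exists_right_inv
  have nonirr : (∃ x : ℚ_[q], (X * Gpoly d z ℚ_[q] + C (s : ℚ_[q])).IsRoot x) →
      ¬ Irreducible (Fpoly r z s ℚ_[q]) := by
    rintro ⟨x, hx⟩ hirr
    rw [← Fpoly_eq d r (by omega) hd] at hx
    have h1 := degree_eq_one_of_irreducible_of_root hirr hx
    have h2 := Fpoly_natDegree d r (by omega) hd z s ℚ_[q] hzK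
    have h3 : (Fpoly r z s ℚ_[q]).natDegree = 1 := natDegree_eq_of_degree_eq_some h1
    rw [h3] at h2
    omega
  have huu : u ^ (d+1) * u' ^ (d+1) = 1 := by rw [← mul_pow, hu', one_pow]
  by_cases hqr : q = r
  · subst hqr
    by_cases hnd : n = d + 1
    · subst hnd
      refine iff_of_true ?_ ⟨rfl, by omega⟩
      exact irr_case q d (by omega) hd z s hz0 u v hu hv hzu hsv
    · refine iff_of_false (nonirr ?_) (by omega)
      obtain ⟨ε, hε, B, hB⟩ := case_eq q d hd2 hd u z hzu
      obtain ⟨k, rfl⟩ : ∃ k, n = d + 2 + k := ⟨n - (d+2), by omega⟩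
      refine root_of q d z s hzZ q ε (q^k * v * u'^(d+1)) hε B hB ?_
      rw [hsv, hzu, mul_pow]
      linear_combination -(q:ℤ_[q])^(d+2+k) * v * huu
  · refine iff_of_false (nonirr ?_) (fun h => hqr h.1)
    obtain ⟨ε, hε, B, hB⟩ := case_ne q r d hd hqr u z hzu
    obtain ⟨k, rfl⟩ : ∃ k, n = d + 1 + k := ⟨n - (d+1), by omega⟩
    refine root_of q d z s hzZ 1 ε (q^k * v * u'^(d+1)) hε B hB ?_
    rw [hsv, hzu, mul_pow]
    linear_combination -(q:ℤ_[q])^(d+1+k) * v * huu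
end

section
/- Let r ≥ 5 be a prime and let z, s be nonzero integers satisfying v_r(z) = 1 and v_r(s) = (r+1)/2. Then for any root γ of F(x) = (−z)^((r−1)/2)·x·h(2 − x²/z) + s in an algebraic closure of ℚ_r, the extension ℚ_r(γ)/ℚ_r has degree r and is totally ramified (equivalently: [ℚ_r(γ) : ℚ_r] = r and the unique extension v_r of the r-adic valuation, normalized by v_r(r) = 1, satisfies 0 < v_r(γ) < 1, forcing ramification index r). -/
open Polynomial

/-- `v` is (the additive form of) the unique extension to the algebraic closure of `ℚ_q` of
the `q`-adic valuation, normalized so that `v q = 1`. -/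
def IsValuationExt (q : ℕ) [Fact q.Prime] (v : AlgebraicClosure ℚ_[q] → ℚ) : Prop :=
  (∀ x y : AlgebraicClosure ℚ_[q], x ≠ 0 → y ≠ 0 → v (x * y) = v x + v y) ∧
  (∀ x y : AlgebraicClosure ℚ_[q], x ≠ 0 → y ≠ 0 → x + y ≠ 0 →
    min (v x) (v y) ≤ v (x + y)) ∧
  (∀ x : ℚ_[q], x ≠ 0 →
    v (algebraMap ℚ_[q] (AlgebraicClosure ℚ_[q]) x) = (x.valuation : ℚ))


noncomputable def pp : ℕ → Polynomial ℤ
  | 0 => 1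
  | 1 => X + 1
  | (n+2) => X * pp (n+1) - pp n

lemma pp_deg (n : ℕ) : (pp n).Monic ∧ (pp n).natDegree = n := by
  induction n using pp.induct with
  | case1 => simp [pp]
  | case2 => exact ⟨by simpa [pp] using monic_X_add_C (1:ℤ), by simpa [pp] using natDegree_X_add_C (1:ℤ)⟩
  | case3 n h1 h2 =>
    have hm : (X * pp (n+1)).Monic := monic_X.mul h1.1
    have hd : (X * pp (n+1)).natDegree = n + 2 := by
      rw [monic_X.natDegree_mul h1.1, h1.2, natDegree_X]; ring
    have hlt : (pp n).degree < (X * pp (n+1)).degree := by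
      rw [degree_eq_natDegree hm.ne_zero, degree_eq_natDegree h2.1.ne_zero, hd, h2.2]
      exact_mod_cast (by omega)
    refine ⟨?_, ?_⟩
    · rw [pp]; exact hm.sub_of_left hlt
    · rw [pp, natDegree_sub_eq_left_of_natDegree_lt (by rw [hd, h2.2]; omega), hd]

lemma pp_eval {K : Type*} [Field K] (t : K) (ht : t ≠ 0) (n : ℕ) :
    t ^ n * aeval (t + t⁻¹) (pp n) = ∑ i ∈ Finset.range (2*n+1), t ^ i := by
  induction n using pp.induct with
  | case1 => simp [pp]
  | case2 => simp [pp, Finset.sum_range_succ]; field_simp; ring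
  | case3 n h1 h2 =>
    have : t ^ (n+2) * aeval (t + t⁻¹) (pp (n+2)) = (t^2+1) * (t^(n+1) * aeval (t + t⁻¹) (pp (n+1))) - t^2 * (t^n * aeval (t + t⁻¹) (pp n)) := by
      rw [pp]; simp; field_simp; ring
    rw [this, h1, h2]
    rw [show 2*(n+2)+1 = 2*n+1+1+1+1+1 by ring, show 2*(n+1)+1 = 2*n+1+1+1 by ring]
    simp only [Finset.sum_range_succ (n := 2*n+1), Finset.sum_range_succ (n := 2*n+1+1), Finset.sum_range_succ (n := 2*n+1+1+1), Finset.sum_range_succ (n := 2*n+1+1+1+1)]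
    ring

lemma pp_mod (r n : ℕ) (hr : r.Prime) (hn : r = 2*n+1) (K : Type*) [Field K] [IsAlgClosed K] [CharP K r] :
    (pp n).map (Int.castRingHom K) = (X - C 2)^n := by
  have hm := (pp_deg n).1.map (Int.castRingHom K)
  have hs := IsAlgClosed.splits ((pp n).map (Int.castRingHom K))
  have hroot : ∀ a ∈ ((pp n).map (Int.castRingHom K)).roots, a = 2 := by
    intro a ha
    rw [mem_roots hm.ne_zero, IsRoot, eval_map] at ha
    obtain ⟨t, ht⟩ := IsAlgClosed.exists_root (X^2 - C a * X + 1 : K[X]) (by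
      have : (X^2 - C a * X + 1 : K[X]).degree = 2 := by compute_degree!
      rw [this]; norm_num)
    simp [IsRoot] at ht
    have t0 : t ≠ 0 := by rintro rfl; simp at ht
    have hat : a = t + t⁻¹ := by field_simp; linear_combination -ht
    have h := pp_eval t t0 n
    have h0 : aeval (t+t⁻¹) (pp n) = 0 := by
      rw [← hat, aeval_def]; exact ha
    rw [h0, mul_zero, ← hn] at h
    have h1 := geom_sum_mul t r
    rw [← h, zero_mul] at h1
    have := Fact.mk hr
    have h2 : (t - 1)^r = 0 := by rw [sub_pow_char, one_pow, ← h1]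
    have h3 : t = 1 := sub_eq_zero.mp (pow_eq_zero_iff hr.ne_zero |>.mp h2)
    rw [hat, h3]; norm_num
  have h1 := hs.eq_prod_roots_of_monic hm
  have h2 := hs.natDegree_eq_card_roots
  rw [(pp_deg n).1.natDegree_map, (pp_deg n).2] at h2
  rw [Multiset.eq_replicate_of_mem hroot, ← h2] at h1
  simpa using h1

lemma hpoly_eq_s4 (r n : ℕ) (hr : r.Prime) (hn : r = 2*n+1) : hpoly r = pp n := by
  have hζ := Complex.isPrimitiveRoot_exp r hr.ne_zero
  unfold hpoly
  set ζ := Complex.exp (2 * Real.pi * Complex.I / (r : ℂ)) with hζd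
  have ζ0 : ζ ≠ 0 := Complex.exp_ne_zero _
  have hroot : aeval (ζ + ζ⁻¹) (pp n) = 0 := by
    have h := pp_eval ζ ζ0 n
    rw [← hn, hζ.geom_sum_eq_zero hr.one_lt] at h
    exact (mul_eq_zero.mp h).resolve_left (pow_ne_zero _ ζ0)
  have hint : IsIntegral ℤ (ζ + ζ⁻¹) := ⟨pp n, (pp_deg n).1, by rw [← aeval_def]; exact hroot⟩
  have hdvd := minpoly.isIntegrallyClosed_dvd hint hroot
  set h := minpoly ℤ (ζ + ζ⁻¹) with hh
  have hm : h.Monic := minpoly.monic hint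
  refine (eq_of_monic_of_dvd_of_natDegree_le hm (pp_deg n).1 hdvd ?_).symm
  rw [(pp_deg n).2]
  -- degree bound
  set d := h.natDegree with hd
  let Q : ℤ[X] := ∑ i ∈ Finset.range (d+1), C (h.coeff i) * ((X^2+1)^i * X^(d-i))
  have hQζ : aeval ζ Q = 0 := by
    have : aeval ζ Q = ζ^d * aeval (ζ+ζ⁻¹) h := by
      rw [aeval_eq_sum_range (p := h), Finset.mul_sum]
      simp only [Q, map_sum]
      refine Finset.sum_congr rfl fun i hi => ?_
      have hi' : i ≤ d := by simpa [Nat.lt_succ_iff] using hi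
      obtain ⟨e, he⟩ := Nat.exists_eq_add_of_le hi'
      rw [he]
      have : ζ^i * (ζ+ζ⁻¹)^i = (ζ^2+1)^i := by
        rw [← mul_pow]; congr 1; field_simp
      simp [zsmul_eq_mul]
      rw [pow_add, ← this]; ring
    rw [this, hh, minpoly.aeval, mul_zero]
  have hlow : ((∑ i ∈ Finset.range d, C (h.coeff i) * ((X^2+1)^i * X^(d-i)) : ℤ[X])).degree < (2*d : ℕ) := by
    refine lt_of_le_of_lt (degree_sum_le _ _) ?_
    rw [Finset.sup_lt_iff (by exact WithBot.bot_lt_coe _)]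
    intro i hi
    rw [Finset.mem_range] at hi
    have hX : (X^2+1 : ℤ[X]).natDegree = 2 := by compute_degree!
    have : (C (h.coeff i) * ((X^2+1)^i * X^(d-i)) : ℤ[X]).natDegree ≤ i*2+(d-i) := by
      refine (natDegree_C_mul_le _ _).trans (natDegree_mul_le.trans ?_)
      gcongr
      · exact natDegree_pow_le.trans (by rw [hX])
      · simp
    refine lt_of_le_of_lt degree_le_natDegree ?_
    exact_mod_cast (by omega)
  have hXm : ((X^2+1 : ℤ[X])^d).Monic := by
    refine Monic.pow ?_ d; monicity!
  have hXd : ((X^2+1 : ℤ[X])^d).natDegree = 2*d := by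
    have hX : (X^2+1 : ℤ[X]).natDegree = 2 := by compute_degree!
    rw [natDegree_pow, hX]; ring
  have hQeq : Q = (∑ i ∈ Finset.range d, C (h.coeff i) * ((X^2+1)^i * X^(d-i)) : ℤ[X]) + (X^2+1)^d := by
    simp only [Q]
    rw [Finset.sum_range_succ, show h.coeff d = 1 from hm]; simp
  have hXdd : ((X^2+1 : ℤ[X])^d).degree = (2*d : ℕ) := by rw [degree_eq_natDegree hXm.ne_zero, hXd]
  have hQd : Q.degree = (2*d : ℕ) := by
    rw [hQeq, degree_add_eq_right_of_degree_lt (by rw [hXdd]; exact hlow), hXdd]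
  have hQ0 : Q ≠ 0 := by
    intro h0; rw [h0, degree_zero] at hQd; exact absurd hQd (WithBot.bot_ne_coe)
  have h3 := natDegree_le_of_dvd (minpoly.isIntegrallyClosed_dvd (hζ.isIntegral hr.pos) hQζ) hQ0
  have h4 := hζ.totient_le_degree_minpoly
  rw [Nat.totient_prime hr] at h4
  rw [natDegree_eq_of_degree_eq_some hQd] at h3
  omega

lemma pp_comp (r n : ℕ) (hr : r.Prime) (hn : r = 2*n+1) :
    ∃ q : ℕ → ℤ, ∀ (K : Type) [Field K] (y : K), aeval (2 - y) (pp n) = (-1)^n * y^n + ∑ j ∈ Finset.range n, (r:K) * (q j : K) * y^j := by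
  have := Fact.mk hr
  let g : ℤ[X] := (pp n).comp (C 2 - X)
  have hX : (C 2 - X : ℤ[X]).natDegree = 1 := by compute_degree!
  have hgd : g.natDegree = n := by
    simp only [g]
    rw [natDegree_comp, hX, (pp_deg n).2, mul_one]
  have hlead : g.coeff n = (-1)^n := by
    have : g.leadingCoeff = (-1)^n := by
      simp only [g]
      rw [leadingCoeff_comp (by rw [hX]; norm_num), (pp_deg n).1.leadingCoeff, (pp_deg n).2, one_mul]
      congr 1
      rw [leadingCoeff, hX]; simp
    rw [← this, leadingCoeff, hgd]
  have hmod : g.map (Int.castRingHom (AlgebraicClosure (ZMod r))) = C ((-1)^n) * X^n := by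
    have : CharP (AlgebraicClosure (ZMod r)) r := inferInstance
    simp only [g]
    rw [Polynomial.map_comp, pp_mod r n hr hn]
    have : ((X - C 2 : (AlgebraicClosure (ZMod r))[X])^n).comp ((C 2 - X : ℤ[X]).map (Int.castRingHom _)) = (-X)^n := by
      simp only [pow_comp, sub_comp, X_comp, C_comp, Polynomial.map_sub, map_X, map_C]
      congr 1
      simp
    rw [this, neg_pow]; simp
  have hdiv : ∀ j < n, ∃ q : ℤ, g.coeff j = r * q := by
    intro j hj
    have := congrArg (fun p => p.coeff j) hmod
    simp only [coeff_map, coeff_C_mul, coeff_X_pow, if_neg hj.ne, mul_zero] at this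
    exact (CharP.intCast_eq_zero_iff (AlgebraicClosure (ZMod r)) r _).mp (by simpa using this)
  choose! q hq using hdiv
  refine ⟨q, fun K _ y => ?_⟩
  have h1 : aeval (2 - y) (pp n) = aeval y g := by
    simp only [g]; rw [aeval_comp]; simp only [map_sub, aeval_C, aeval_X]; simp
  rw [h1, aeval_eq_sum_range, hgd, Finset.sum_range_succ, hlead, add_comm]
  congr 1
  · simp
  · refine Finset.sum_congr rfl fun j hj => ?_
    rw [hq j (Finset.mem_range.mp hj)]; simp

section valn
variable {r : ℕ} [Fact r.Prime] {v : AlgebraicClosure ℚ_[r] → ℚ}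

lemma v_one (hv : IsValuationExt r v) : v 1 = 0 := by
  have := hv.1 1 1 one_ne_zero one_ne_zero
  rw [mul_one] at this; linarith

lemma v_neg (hv : IsValuationExt r v) (x : AlgebraicClosure ℚ_[r]) : v (-x) = v x := by
  by_cases hx : x = 0
  · simp [hx]
  have h := hv.1 (-1) (-1) (by simp) (by simp)
  rw [neg_mul_neg, one_mul, v_one hv] at h
  have h2 := hv.1 (-1) x (by simp) hx
  rw [neg_one_mul] at h2; linarith

lemma v_pow (hv : IsValuationExt r v) (x : AlgebraicClosure ℚ_[r]) (hx : x ≠ 0) (n : ℕ) :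
    v (x^n) = n * v x := by
  induction n with
  | zero => simp [v_one hv]
  | succ n ih => rw [pow_succ, hv.1 _ _ (pow_ne_zero _ hx) hx, ih]; push_cast; ring

lemma v_int (hv : IsValuationExt r v) (m : ℤ) (hm : m ≠ 0) :
    v (m : AlgebraicClosure ℚ_[r]) = ((m : ℚ_[r]).valuation : ℚ) := by
  rw [← hv.2.2 (m : ℚ_[r]) (by exact_mod_cast hm)]; simp

lemma v_int_nonneg (hv : IsValuationExt r v) (m : ℤ) (hm : m ≠ 0) :
    0 ≤ v (m : AlgebraicClosure ℚ_[r]) := by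
  rw [v_int hv m hm, Padic.valuation_intCast]; positivity

lemma G_add (hv : IsValuationExt r v) (c : ℚ) (x y : AlgebraicClosure ℚ_[r])
    (hx : x = 0 ∨ c < v x) (hy : y = 0 ∨ c < v y) : x + y = 0 ∨ c < v (x + y) := by
  by_cases h : x + y = 0
  · exact Or.inl h
  by_cases x0 : x = 0
  · subst x0; simpa using hy
  by_cases y0 : y = 0
  · subst y0; simpa using hx
  right
  exact lt_of_lt_of_le (lt_min (hx.resolve_left x0) (hy.resolve_left y0)) (hv.2.1 x y x0 y0 h)

lemma G_sum (hv : IsValuationExt r v) (c : ℚ) (S : Finset ℕ) (f : ℕ → AlgebraicClosure ℚ_[r])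
    (hf : ∀ i ∈ S, f i = 0 ∨ c < v (f i)) : (∑ i ∈ S, f i) = 0 ∨ c < v (∑ i ∈ S, f i) := by
  induction S using Finset.cons_induction with
  | empty => simp
  | cons a S ha ih =>
    rw [Finset.sum_cons]
    exact G_add hv c _ _ (hf a (by simp)) (ih fun i hi => hf i (by simp [hi]))

lemma v_multiset (hv : IsValuationExt r v) (w : ℚ) (M : Multiset (AlgebraicClosure ℚ_[r]))
    (hM : ∀ x ∈ M, x ≠ 0 ∧ v x = w) : M.prod ≠ 0 ∧ v M.prod = M.card * w := by
  induction M using Multiset.induction with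
  | empty => simp [v_one hv]
  | cons a M ih =>
    have h1 := hM a (by simp)
    have h2 := ih fun x hx => hM x (by simp [hx])
    refine ⟨by simp [h1.1, h2.1], ?_⟩
    rw [Multiset.prod_cons, hv.1 _ _ h1.1 h2.1, h1.2, h2.2]; simp; ring

lemma root_val (n : ℕ) (hn : r = 2*n+1) (z s : ℤ) (hz0 : z ≠ 0) (hs0 : s ≠ 0)
    (hz : ((z : ℚ_[r])).valuation = 1)
    (hs : 2 * ((s : ℚ_[r])).valuation = (r : ℤ) + 1)
    (hv : IsValuationExt r v)
    (γ : AlgebraicClosure ℚ_[r]) (hγ : aeval γ (Fpoly r z s ℚ_[r]) = 0) :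
    γ ≠ 0 ∧ v γ = (r + 1) / (2 * r) := by
  have hr := (Fact.out : r.Prime)
  obtain ⟨q, hq⟩ := pp_comp r n hr hn
  have hn2 : (r-1)/2 = n := by omega
  have hzK : (z : AlgebraicClosure ℚ_[r]) ≠ 0 := by exact_mod_cast hz0
  have hsK : (s : AlgebraicClosure ℚ_[r]) ≠ 0 := by exact_mod_cast hs0
  have hrK : ((r : ℤ) : AlgebraicClosure ℚ_[r]) ≠ 0 := by exact_mod_cast hr.ne_zero
  have vz : v (z : AlgebraicClosure ℚ_[r]) = 1 := by rw [v_int hv z hz0, hz]; simp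
  have vr : v ((r : ℤ) : AlgebraicClosure ℚ_[r]) = 1 := by
    rw [v_int hv r (by exact_mod_cast hr.ne_zero)]; simp
  have vs : v (s : AlgebraicClosure ℚ_[r]) = (r+1)/2 := by
    rw [v_int hv s hs0]
    have : (2 * ((s : ℚ_[r])).valuation : ℚ) = (r : ℚ) + 1 := by exact_mod_cast hs
    linarith
  have key : γ^r + (∑ j ∈ Finset.range n, ((r : ℤ) : AlgebraicClosure ℚ_[r]) * (((-1)^n * q j : ℤ) : AlgebraicClosure ℚ_[r]) * (γ^(2*j+1) * (z : AlgebraicClosure ℚ_[r])^(n-j))) + s = 0 := by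
    rw [← hγ]
    unfold Fpoly
    rw [hpoly_eq_s4 r n hr hn, hn2]
    have e : aeval γ (((pp n).map (Int.castRingHom ℚ_[r])).comp (C 2 - C ((z : ℚ_[r]))⁻¹ * X ^ 2))
      = aeval (2 - (z : AlgebraicClosure ℚ_[r])⁻¹ * γ^2) (pp n) := by
      rw [aeval_comp]
      simp only [map_sub, map_mul, aeval_C, aeval_X, map_pow, map_inv₀, map_intCast, map_ofNat]
      rw [← algebraMap_int_eq, aeval_map_algebraMap]
    have e2 : aeval (2 - (z : AlgebraicClosure ℚ_[r])⁻¹ * γ^2) (pp n) =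
        (-1)^n * ((z : AlgebraicClosure ℚ_[r])⁻¹ * γ^2)^n + ∑ j ∈ Finset.range n,
          (r : AlgebraicClosure ℚ_[r]) * (q j : AlgebraicClosure ℚ_[r]) *
            ((z : AlgebraicClosure ℚ_[r])⁻¹ * γ^2)^j := by
      have h := hq _ ((z : AlgebraicClosure ℚ_[r])⁻¹ * γ^2)
      rw [aeval_def] at h ⊢
      exact (congrArg (fun f => eval₂ f (2 - (z : AlgebraicClosure ℚ_[r])⁻¹ * γ^2) (pp n))
        (Subsingleton.elim _ _)).trans h
    rw [map_add, map_mul, e, e2]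
    simp only [map_mul, aeval_C, aeval_X, map_intCast]
    congr 1
    rw [mul_add, Finset.mul_sum]
    congr 1
    · have hpow : γ^r = γ^(2*n+1) := congrArg (fun k => γ^k) hn
      rw [hpow]; push_cast
      rw [neg_pow (z : AlgebraicClosure ℚ_[r]), mul_pow, inv_pow]
      have : ((-1 : AlgebraicClosure ℚ_[r])^n) * (-1)^n = 1 := by rw [← mul_pow]; simp
      field_simp
      rw [pow_succ, show ((-1 : AlgebraicClosure ℚ_[r])^n)^2 = 1 by rw [sq, this]]
      ring
    · refine Finset.sum_congr rfl fun j hj => ?_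
      obtain ⟨e, rfl⟩ := Nat.exists_eq_add_of_le (Finset.mem_range.mp hj).le
      rw [Nat.add_sub_cancel_left]
      push_cast
      rw [neg_pow (z : AlgebraicClosure ℚ_[r]), mul_pow, inv_pow, pow_add (z : AlgebraicClosure ℚ_[r])]
      field_simp
      rw [pow_succ, pow_mul]; ring
  have γ0 : γ ≠ 0 := by
    rintro rfl
    simp [hr.ne_zero] at key
    exact hs0 key
  refine ⟨γ0, ?_⟩
  have hrpos : (0 : ℚ) < r := by exact_mod_cast hr.pos
  have hrn : (r : ℚ) = 2 * n + 1 := by exact_mod_cast hn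
  set w := v γ with hw
  have hterm : ∀ c : ℚ, (∀ j : ℕ, j < n → c < 1 + ((2*j+1) * w + (n - j))) → ∀ j ∈ Finset.range n,
      ((r : ℤ) : AlgebraicClosure ℚ_[r]) * (((-1)^n * q j : ℤ) : AlgebraicClosure ℚ_[r]) * (γ^(2*j+1) * (z : AlgebraicClosure ℚ_[r])^(n-j)) = 0 ∨
      c < v (((r : ℤ) : AlgebraicClosure ℚ_[r]) * (((-1)^n * q j : ℤ) : AlgebraicClosure ℚ_[r]) * (γ^(2*j+1) * (z : AlgebraicClosure ℚ_[r])^(n-j))) := by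
    intro c hc j hj
    have hj := Finset.mem_range.mp hj
    by_cases h0 : (-1)^n * q j = 0
    · left; rw [h0]; simp
    right
    have h0' : (((-1)^n * q j : ℤ) : AlgebraicClosure ℚ_[r]) ≠ 0 := Int.cast_ne_zero.mpr h0
    rw [hv.1 _ _ (mul_ne_zero hrK h0') (mul_ne_zero (pow_ne_zero _ γ0) (pow_ne_zero _ hzK)),
      hv.1 _ _ hrK h0', hv.1 _ _ (pow_ne_zero _ γ0) (pow_ne_zero _ hzK), v_pow hv _ γ0, v_pow hv _ hzK, vr, vz]
    have h1 := v_int_nonneg hv _ h0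
    have h2 := hc j hj
    rw [← hw, Nat.cast_sub hj.le]; push_cast at h1 ⊢; linarith
  set T := (∑ j ∈ Finset.range n, ((r : ℤ) : AlgebraicClosure ℚ_[r]) * (((-1)^n * q j : ℤ) : AlgebraicClosure ℚ_[r]) * (γ^(2*j+1) * (z : AlgebraicClosure ℚ_[r])^(n-j))) with hT
  have vγ : v (γ^r) = r * w := v_pow hv γ γ0 r
  rw [eq_div_iff (by positivity)]
  rcases lt_trichotomy (w * (2 * r)) (r + 1) with h | h | h
  · exfalso
    have hTG := G_sum hv (r * w) _ _ (hterm (r * w) (by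
      intro j hj
      have hj' : (j : ℚ) + 1 ≤ n := by exact_mod_cast hj
      have hj0 : (0 : ℚ) ≤ j := by positivity
      have h3 : w * (2*r) * (n - j) < (r+1) * (n-j) := by gcongr; linarith
      have h4 : (r:ℚ) * (2 * w * (n-j)) < r * (n - j + 1) := by nlinarith
      have h5 := lt_of_mul_lt_mul_left h4 hrpos.le
      rw [hrn]; linarith))
    rw [← hT] at hTG
    have hsG := G_add hv (r * w) T s hTG (Or.inr (by rw [vs]; linarith))
    have : T + s = -γ^r := by linear_combination key
    rw [this, v_neg hv, vγ] at hsG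
    rcases hsG with h | h
    · exact pow_ne_zero r γ0 (neg_eq_zero.mp h)
    · exact lt_irrefl _ h
  · exact h
  · exfalso
    have hTG := G_sum hv ((r+1)/2) _ _ (hterm ((r+1)/2) (by
      intro j hj
      have hj' : (j : ℚ) + 1 ≤ n := by exact_mod_cast hj
      have hj0 : (0 : ℚ) ≤ j := by positivity
      have h3 : (r+1) * (2*j+1) < w * (2*r) * (2*(j:ℚ)+1) := by gcongr
      have h4 : (r:ℚ) * ((r+1)/2) < r * (1 + ((2*j+1) * w + (n - j))) := by nlinarith
      exact lt_of_mul_lt_mul_left h4 hrpos.le))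
    rw [← hT] at hTG
    have hsG := G_add hv ((r+1)/2) (γ^r) T (Or.inr (by rw [vγ]; linarith)) hTG
    have : γ^r + T = -s := by linear_combination key
    rw [this, v_neg hv, vs] at hsG
    rcases hsG with h | h
    · exact hsK (neg_eq_zero.mp h)
    · exact lt_irrefl _ h

end valn

/-- **Lemma 5.13.** Let `r ≥ 5` be a prime and `z, s` nonzero integers with `v_r(z) = 1`
and `v_r(s) = (r+1)/2`.  Then for any root `γ` of `F(x)` in an algebraic closure of `ℚ_r`,
the extension `ℚ_r(γ)/ℚ_r` has degree `r` and is totally ramified: `[ℚ_r(γ) : ℚ_r] = r`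
and `0 < v_r(γ) < 1` (which forces ramification index `r`). -/
theorem stmt_4 (r : ℕ) [Fact r.Prime] (hr : 5 ≤ r)
    (z s : ℤ) (hz0 : z ≠ 0) (hs0 : s ≠ 0)
    (hz : ((z : ℚ_[r])).valuation = 1)
    (hs : 2 * ((s : ℚ_[r])).valuation = (r : ℤ) + 1)
    (v : AlgebraicClosure ℚ_[r] → ℚ) (hv : IsValuationExt r v)
    (γ : AlgebraicClosure ℚ_[r]) (hγ : aeval γ (Fpoly r z s ℚ_[r]) = 0) :
    (minpoly ℚ_[r] γ).natDegree = r ∧ 0 < v γ ∧ v γ < 1 := by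
  have hp := (Fact.out : r.Prime)
  obtain ⟨n, hn⟩ : ∃ n, r = 2*n+1 := hp.odd_of_ne_two (by omega)
  have hroot := root_val n hn z s hz0 hs0 hz hs hv
  have hw := (hroot γ hγ).2
  have hrQ : (5 : ℚ) ≤ r := by exact_mod_cast hr
  refine ⟨?_, by rw [hw]; positivity, by rw [hw, div_lt_one (by positivity)]; linarith⟩
  have hint : IsIntegral ℚ_[r] γ := Algebra.IsIntegral.isIntegral γ
  have hdvd := minpoly.dvd ℚ_[r] γ hγ
  have hF0 : Fpoly r z s ℚ_[r] ≠ 0 := by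
    intro h
    have := congrArg (eval 0) h
    simp [Fpoly] at this
    exact hs0 this
  have hFd : (Fpoly r z s ℚ_[r]).natDegree ≤ r := by
    unfold Fpoly
    rw [hpoly_eq_s4 r n hp hn, natDegree_add_C, mul_assoc]
    refine (natDegree_C_mul_le _ _).trans (natDegree_mul_le.trans ?_)
    rw [natDegree_X, natDegree_comp, (pp_deg n).1.natDegree_map, (pp_deg n).2]
    have : (C 2 - C ((z : ℚ_[r]))⁻¹ * X ^ 2).natDegree ≤ 2 := by compute_degree
    nlinarith
  have hle := (natDegree_le_of_dvd hdvd hF0).trans hFd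
  have hpos := minpoly.natDegree_pos hint
  refine le_antisymm hle (Nat.le_of_dvd hpos ?_)
  set m := minpoly ℚ_[r] γ with hm
  have hmon : m.Monic := minpoly.monic hint
  set M := m.map (algebraMap ℚ_[r] (AlgebraicClosure ℚ_[r])) with hM
  have hMmon : M.Monic := hmon.map _
  have hsp : M.Splits := IsAlgClosed.splits M
  have hcard := hsp.natDegree_eq_card_roots
  rw [hM, hmon.natDegree_map, ← hM] at hcard
  have hprod := v_multiset hv ((r+1)/(2*r)) M.roots (by
    intro x hx
    refine hroot x ?_
    have hx' := (mem_roots hMmon.ne_zero).mp hx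
    obtain ⟨c, hc⟩ := hdvd
    rw [hc, map_mul, aeval_def, ← eval_map, ← hM, hx', zero_mul])
  have h0 := hsp.coeff_zero_eq_prod_roots_of_monic hMmon
  have hv0 : v (M.coeff 0) = v M.roots.prod := by
    rw [h0]
    rcases neg_one_pow_eq_or (AlgebraicClosure ℚ_[r]) M.natDegree with h | h <;> rw [h]
    · rw [one_mul]
    · rw [neg_one_mul, v_neg hv]
  have hM0 : M.coeff 0 = algebraMap _ _ (m.coeff 0) := by rw [hM, coeff_map]
  have hm0 : m.coeff 0 ≠ 0 := by
    rw [hm]; exact minpoly.coeff_zero_ne_zero hint (hroot γ hγ).1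
  rw [hM0, hv.2.2 _ hm0, hprod.2, ← hcard] at hv0
  have h1 : ((2 * r * (m.coeff 0).valuation : ℤ) : ℚ) = ((m.natDegree * (r+1) : ℤ) : ℚ) := by
    push_cast; rw [hv0]; field_simp
  have h2 : (2 * r * (m.coeff 0).valuation : ℤ) = (m.natDegree * (r+1) : ℤ) := by exact_mod_cast h1
  have h3 : (r : ℤ) ∣ m.natDegree := ⟨2 * (m.coeff 0).valuation - m.natDegree, by linear_combination -h2⟩
  exact_mod_cast h3
end

section
/- Let r ≥ 5 be a prime and q an odd prime dividing both z and s, where z, s are nonzero integers satisfying (I): v_q(z) = 1 and (II): v_q(s) ≥ (r+1)/2. Set Δ = s² − 4z^r, fix a square root √Δ of Δ in an algebraic closure of ℚ_q, and fix elements α₀, β₀ of the algebraic closure with α₀^r = −(s + √Δ)/2 and β₀^r = −(s − √Δ)/2. Then, with v_q the unique extension of the q-adic valuation normalized by v_q(q) = 1, one has v_q(√Δ) = r/2, v_q(α₀) = v_q(β₀) = 1/2, and v_q(α₀ − ζ_r^j β₀) = 1/2 for every j with 0 ≤ j ≤ r − 1, where ζ_r is a primitive r-th root of unity in the algebraic closure.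 -/
open Polynomial

namespace S5

variable {q : ℕ} [Fact q.Prime] {v : AlgebraicClosure ℚ_[q] → ℚ}

lemma v_one (hv : IsValuationExt q v) : v 1 = 0 := by
  have := hv.1 1 1 one_ne_zero one_ne_zero
  rw [mul_one] at this
  linarith

lemma v_neg (hv : IsValuationExt q v) (x : AlgebraicClosure ℚ_[q]) : v (-x) = v x := by
  by_cases hx : x = 0
  · simp [hx]
  have h1 := hv.1 (-1) (-1) (by simp) (by simp)
  have h2 := hv.1 (-1) x (by simp) hx
  have h3 := v_one hv
  simp only [neg_mul, one_mul, neg_neg] at h1 h2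
  linarith

lemma v_pow (hv : IsValuationExt q v) {x : AlgebraicClosure ℚ_[q]} (hx : x ≠ 0) (n : ℕ) :
    v (x ^ n) = n * v x := by
  induction n with
  | zero => simp [v_one hv]
  | succ k ih =>
    rw [pow_succ, hv.1 _ _ (pow_ne_zero _ hx) hx, ih]
    push_cast
    ring

lemma v_add (hv : IsValuationExt q v) {x y : AlgebraicClosure ℚ_[q]} (hx : x ≠ 0) (hy : y ≠ 0)
    (h : v x < v y) : x + y ≠ 0 ∧ v (x + y) = v x := by
  have h0 : x + y ≠ 0 := by
    intro h0
    have : y = -x := by linear_combination h0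
    rw [this, v_neg hv] at h
    exact lt_irrefl _ h
  refine ⟨h0, ?_⟩
  have h1 := hv.2.1 x y hx hy h0
  have h2 := hv.2.1 (x + y) (-y) h0 (by simpa using hy) (by simpa using hx)
  rw [v_neg hv, add_neg_cancel_right] at h2
  rw [min_eq_left h.le] at h1
  rcases min_le_iff.1 h2 with h3 | h3 <;> linarith

lemma v_int (hv : IsValuationExt q v) {n : ℤ} (hn : n ≠ 0) :
    v (n : AlgebraicClosure ℚ_[q]) = ((n : ℚ_[q]).valuation : ℚ) := by
  rw [← hv.2.2 _ (by exact_mod_cast hn), map_intCast]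

lemma v_prod (hv : IsValuationExt q v) {ι : Type*} (t : Finset ι)
    (f : ι → AlgebraicClosure ℚ_[q]) (hf : ∀ i ∈ t, f i ≠ 0) :
    v (∏ i ∈ t, f i) = ∑ i ∈ t, v (f i) := by
  classical
  induction t using Finset.induction_on with
  | empty => simp [v_one hv]
  | insert a t ha ih =>
    have h1 : ∀ i ∈ t, f i ≠ 0 := fun i hi => hf i (Finset.mem_insert_of_mem hi)
    rw [Finset.prod_insert ha, Finset.sum_insert ha,
      hv.1 _ _ (hf a (Finset.mem_insert_self _ _)) (Finset.prod_ne_zero_iff.2 h1), ih h1]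

lemma v_two (hv : IsValuationExt q v) (hq : Odd q) : v 2 = 0 := by
  have h := v_int hv (n := 2) (by norm_num)
  have h2 : ((2 : ℤ) : ℚ_[q]).valuation = 0 := by
    rw [Padic.valuation_intCast]
    have : ¬ (q : ℤ) ∣ 2 := by
      intro hd
      have h3 : q ∣ 2 := by exact_mod_cast hd
      rw [Nat.prime_dvd_prime_iff_eq Fact.out Nat.prime_two] at h3
      subst h3
      exact absurd hq (by decide)
    rw [padicValInt.eq_zero_of_not_dvd this]
    rfl
  rw [h2] at h
  simpa using h

end S5

/-- **Lemma 5.11.** Let `r ≥ 5` be a prime and `q` an odd prime dividing both `z` and `s`,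
where `z, s` are nonzero integers with `v_q(z) = 1` and `v_q(s) ≥ (r+1)/2`.  Let
`Δ = s² - 4z^r`, let `√Δ` be a square root of `Δ`, and let `α₀, β₀` satisfy
`α₀^r = -(s+√Δ)/2` and `β₀^r = -(s-√Δ)/2`, all in an algebraic closure of `ℚ_q`.  Then
`v_q(√Δ) = r/2`, `v_q(α₀) = v_q(β₀) = 1/2`, and `v_q(α₀ - ζ_r^j β₀) = 1/2` for all
`0 ≤ j ≤ r - 1`, where `ζ_r` is a primitive `r`-th root of unity. -/
theorem stmt_5 (r q : ℕ) [Fact r.Prime] [Fact q.Prime] (hr : 5 ≤ r) (hqodd : Odd q)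
    (z s : ℤ) (hz0 : z ≠ 0) (hs0 : s ≠ 0)
    (hqz : (q : ℤ) ∣ z) (hqs : (q : ℤ) ∣ s)
    (hz : ((z : ℚ_[q])).valuation = 1)
    (hs : (r : ℤ) + 1 ≤ 2 * ((s : ℚ_[q])).valuation)
    (v : AlgebraicClosure ℚ_[q] → ℚ) (hv : IsValuationExt q v)
    (sqrtD α₀ β₀ ζ : AlgebraicClosure ℚ_[q])
    (hsq : sqrtD ^ 2 = ((s ^ 2 - 4 * z ^ r : ℤ) : AlgebraicClosure ℚ_[q]))
    (hα : α₀ ^ r = -(((s : ℤ) : AlgebraicClosure ℚ_[q]) + sqrtD) / 2)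
    (hβ : β₀ ^ r = -(((s : ℤ) : AlgebraicClosure ℚ_[q]) - sqrtD) / 2)
    (hζ : IsPrimitiveRoot ζ r) :
    v sqrtD = (r : ℚ) / 2 ∧ v α₀ = 1 / 2 ∧ v β₀ = 1 / 2 ∧
      ∀ j : ℕ, j ≤ r - 1 → v (α₀ - ζ ^ j * β₀) = 1 / 2 := by
  have h20 : (2 : AlgebraicClosure ℚ_[q]) ≠ 0 := two_ne_zero
  have hr0 : (0 : ℚ) < r := by exact_mod_cast (by omega : 0 < r)
  have hv2 := S5.v_two hv hqodd
  have hzC : (z : AlgebraicClosure ℚ_[q]) ≠ 0 := by exact_mod_cast hz0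
  have hsC : (s : AlgebraicClosure ℚ_[q]) ≠ 0 := by exact_mod_cast hs0
  have hvz : v (z : AlgebraicClosure ℚ_[q]) = 1 := by rw [S5.v_int hv hz0, hz]; simp
  have hvs : (r : ℚ) + 1 ≤ 2 * v (s : AlgebraicClosure ℚ_[q]) := by
    rw [S5.v_int hv hs0]; exact_mod_cast hs
  have hA0 : (-(2 ^ 2 * (z : AlgebraicClosure ℚ_[q]) ^ r)) ≠ 0 :=
    neg_ne_zero.2 (mul_ne_zero (pow_ne_zero _ h20) (pow_ne_zero _ hzC))
  have hvA : v (-(2 ^ 2 * (z : AlgebraicClosure ℚ_[q]) ^ r)) = r := by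
    rw [S5.v_neg hv, hv.1 _ _ (pow_ne_zero _ h20) (pow_ne_zero _ hzC), S5.v_pow hv h20,
      S5.v_pow hv hzC, hv2, hvz]
    ring
  have hvs2 : v ((s : AlgebraicClosure ℚ_[q]) ^ 2) = 2 * v (s : AlgebraicClosure ℚ_[q]) := by
    rw [S5.v_pow hv hsC]; norm_num
  obtain ⟨hD0, hvD⟩ := S5.v_add hv hA0 (pow_ne_zero 2 hsC) (by rw [hvA, hvs2]; linarith)
  have hDe : -(2 ^ 2 * (z : AlgebraicClosure ℚ_[q]) ^ r) + (s : AlgebraicClosure ℚ_[q]) ^ 2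
      = sqrtD ^ 2 := by
    rw [hsq]; push_cast; ring
  rw [hDe] at hD0 hvD
  have hd0 : sqrtD ≠ 0 := by
    intro h; apply hD0; rw [h]; simp
  have hvd : v sqrtD = (r : ℚ) / 2 := by
    rw [S5.v_pow hv hd0, hvA] at hvD
    push_cast at hvD
    linarith
  have key : ∀ d x : AlgebraicClosure ℚ_[q], d ≠ 0 → v d = (r : ℚ) / 2 →
      x ^ r = -((s : AlgebraicClosure ℚ_[q]) + d) / 2 → x ≠ 0 ∧ v x = 1 / 2 := by
    intro d x hd hvd' hx
    obtain ⟨h1, h2⟩ := S5.v_add hv hd hsC (by rw [hvd']; linarith)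
    have h3 : -(2 * x ^ r) = d + s := by rw [hx]; ring
    have hx0 : x ≠ 0 := by
      intro h
      apply h1
      rw [← h3, h, zero_pow (by omega)]
      simp
    refine ⟨hx0, ?_⟩
    rw [← h3, S5.v_neg hv, hv.1 _ _ h20 (pow_ne_zero _ hx0), S5.v_pow hv hx0, hv2, hvd'] at h2
    have : (r : ℚ) * (v x - 1 / 2) = 0 := by linarith
    rcases mul_eq_zero.1 this with h | h <;> linarith
  obtain ⟨ha0, hva⟩ := key sqrtD α₀ hd0 hvd hα
  obtain ⟨hb0, hvb⟩ := key (-sqrtD) β₀ (neg_ne_zero.2 hd0) (by rw [S5.v_neg hv, hvd])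
    (by rw [hβ]; ring)
  refine ⟨hvd, hva, hvb, ?_⟩
  have hprod : -sqrtD = ∏ η ∈ nthRootsFinset r (1 : AlgebraicClosure ℚ_[q]), (α₀ - η * β₀) := by
    rw [← hζ.pow_sub_pow_eq_prod_sub_mul _ _ (by omega), hα, hβ]
    ring
  have hne : ∀ η ∈ nthRootsFinset r (1 : AlgebraicClosure ℚ_[q]), α₀ - η * β₀ ≠ 0 := by
    rw [← Finset.prod_ne_zero_iff, ← hprod]
    exact neg_ne_zero.2 hd0
  have hge : ∀ η ∈ nthRootsFinset r (1 : AlgebraicClosure ℚ_[q]), 1 / 2 ≤ v (α₀ - η * β₀) := by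
    intro η hη
    have h1 : η ^ r = 1 := (mem_nthRootsFinset (by omega) _).1 hη
    have hη0 : η ≠ 0 := by
      intro h
      rw [h, zero_pow (by omega)] at h1
      exact zero_ne_one h1
    have hvη : v η = 0 := by
      have h2 := S5.v_pow hv hη0 r
      rw [h1, S5.v_one hv] at h2
      rcases mul_eq_zero.1 h2.symm with h | h <;> linarith
    have h3 := hv.2.1 α₀ (-(η * β₀)) ha0 (neg_ne_zero.2 (mul_ne_zero hη0 hb0))
      (by rw [← sub_eq_add_neg]; exact hne η hη)
    rw [S5.v_neg hv, hv.1 _ _ hη0 hb0, hva, hvb, hvη, ← sub_eq_add_neg] at h3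
    simpa using h3
  have hsum : ∑ η ∈ nthRootsFinset r (1 : AlgebraicClosure ℚ_[q]), (1 / 2 : ℚ)
      = ∑ η ∈ nthRootsFinset r (1 : AlgebraicClosure ℚ_[q]), v (α₀ - η * β₀) := by
    rw [← S5.v_prod hv _ _ hne, ← hprod, S5.v_neg hv, hvd, Finset.sum_const,
      hζ.card_nthRootsFinset, nsmul_eq_mul]
    ring
  intro j _
  refine ((Finset.sum_eq_sum_iff_of_le hge).1 hsum (ζ ^ j) ?_).symm
  rw [mem_nthRootsFinset (by omega), ← pow_mul, mul_comm, pow_mul, hζ.pow_eq_one, one_pow]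
end

section
/- Let r ≥ 5 be a prime and let z, s be nonzero integers with v_r(z) = 1 and v_r(s) = (r+1)/2. Set Δ = s² − 4z^r and fix a square root √Δ of Δ in an algebraic closure of ℚ_r; then v_r(Δ) = r, so π := √Δ / r^((r−1)/2) satisfies v_r(π) = 1/2 and is a uniformizer of the ramified quadratic extension ℚ_r(√Δ)/ℚ_r. Set u := −(s + √Δ)/(2π^r). Then v_r(u) = 0 and v_r(u^r − u) = 1/2; equivalently, in the valuation of ℚ_r(√Δ) normalized so that π has valuation 1, u is a unit and u^r − u is a uniformizer. -/
namespace S7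

/-- `x` is zero or has valuation at least `c`. -/
def P {q : ℕ} [Fact q.Prime] (v : AlgebraicClosure ℚ_[q] → ℚ) (c : ℚ)
    (x : AlgebraicClosure ℚ_[q]) : Prop := x = 0 ∨ c ≤ v x

section
variable {q : ℕ} [Fact q.Prime] {v : AlgebraicClosure ℚ_[q] → ℚ}

theorem v_one (hv : IsValuationExt q v) : v 1 = 0 := by
  have := hv.1 1 1 one_ne_zero one_ne_zero
  rw [mul_one] at this; linarith

theorem v_neg (hv : IsValuationExt q v) (x : AlgebraicClosure ℚ_[q]) : v (-x) = v x := by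
  by_cases hx : x = 0
  · simp [hx]
  have h1 := hv.1 (-1) (-1) (by simp) (by simp)
  rw [neg_mul_neg, mul_one, v_one hv] at h1
  have h2 := hv.1 (-1) x (by simp) hx
  rw [neg_one_mul] at h2
  linarith

theorem v_pow (hv : IsValuationExt q v) (x : AlgebraicClosure ℚ_[q]) (hx : x ≠ 0) (n : ℕ) :
    v (x ^ n) = n * v x := by
  induction n with
  | zero => simp [v_one hv]
  | succ n ih => rw [pow_succ, hv.1 _ _ (pow_ne_zero _ hx) hx, ih]; push_cast; ring

theorem P_add (hv : IsValuationExt q v) {c : ℚ} {x y : AlgebraicClosure ℚ_[q]}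
    (hx : P v c x) (hy : P v c y) : P v c (x + y) := by
  by_cases h : x + y = 0
  · exact Or.inl h
  rcases hx with rfl | hx
  · simpa using hy
  by_cases hx0 : x = 0
  · subst hx0; simpa using hy
  rcases hy with rfl | hy
  · right; simpa using hx
  by_cases hy0 : y = 0
  · subst hy0; right; simpa using hx
  exact Or.inr ((le_min hx hy).trans (hv.2.1 x y hx0 hy0 h))

theorem P_mul (hv : IsValuationExt q v) {c d : ℚ} {x y : AlgebraicClosure ℚ_[q]}
    (hx : P v c x) (hy : P v d y) : P v (c + d) (x * y) := by
  by_cases hx0 : x = 0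
  · left; simp [hx0]
  by_cases hy0 : y = 0
  · left; simp [hy0]
  right
  rw [hv.1 x y hx0 hy0]
  exact add_le_add (hx.resolve_left hx0) (hy.resolve_left hy0)

theorem P_neg (hv : IsValuationExt q v) {c : ℚ} {x : AlgebraicClosure ℚ_[q]}
    (hx : P v c x) : P v c (-x) := by
  rcases hx with rfl | hx
  · left; simp
  · right; rwa [v_neg hv]

theorem P_mono {c d : ℚ} (h : c ≤ d) {x : AlgebraicClosure ℚ_[q]}
    (hx : P v d x) : P v c x := hx.imp id h.trans

theorem v_add (hv : IsValuationExt q v) {c d : ℚ} (hcd : c < d) {x y : AlgebraicClosure ℚ_[q]}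
    (hx0 : x ≠ 0) (hx : v x = c) (hy : P v d y) : x + y ≠ 0 ∧ v (x + y) = c := by
  by_cases hy0 : y = 0
  · subst hy0; simpa using ⟨hx0, hx⟩
  have hy := hy.resolve_left hy0
  have hne : x + y ≠ 0 := by
    intro h
    have : y = -x := by linear_combination h
    rw [this, v_neg hv] at hy
    linarith
  refine ⟨hne, ?_⟩
  have h1 := hv.2.1 x y hx0 hy0 hne
  have h2 := hv.2.1 (x + y) (-y) hne (neg_ne_zero.2 hy0) (by simpa using hx0)
  rw [add_neg_cancel_right, v_neg hv, hx] at h2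
  rw [hx, min_eq_left (by linarith)] at h1
  rcases min_le_iff.1 h2 with h | h <;> linarith

/-- valuation subring -/
def O (hv : IsValuationExt q v) : Subring (AlgebraicClosure ℚ_[q]) where
  carrier := {x | P v 0 x}
  mul_mem' := fun hx hy => by simpa using P_mul hv hx hy
  one_mem' := Or.inr (v_one hv).ge
  add_mem' := fun hx hy => P_add hv hx hy
  zero_mem' := Or.inl rfl
  neg_mem' := fun hx => P_neg hv hx

theorem frob (hv : IsValuationExt q v) {x y : AlgebraicClosure ℚ_[q]} (hx : P v 0 x)
    (hy : P v 0 y) : ∃ w, P v 0 w ∧ (x + y) ^ q = x ^ q + y ^ q + q * w := by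
  obtain ⟨w, hw⟩ := exists_add_pow_prime_eq (Fact.out : q.Prime)
    (⟨x, hx⟩ : O hv) (⟨y, hy⟩ : O hv)
  refine ⟨x * y * w, (O hv).mul_mem ((O hv).mul_mem hx hy) w.2, ?_⟩
  have := congrArg (Subtype.val) hw
  push_cast at this
  linear_combination this

end

theorem fermat {q : ℕ} [Fact q.Prime] (a : ℤ_[q]) : ∃ w, a ^ q - a = q * w := by
  have h : a ^ q - a ∈ RingHom.ker (PadicInt.toZMod : ℤ_[q] →+* ZMod q) := by
    rw [RingHom.mem_ker]; simp
  rw [PadicInt.ker_toZMod, PadicInt.maximalIdeal_eq_span_p, Ideal.mem_span_singleton] at h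
  exact h

/-- the structure map -/
noncomputable def φ (q : ℕ) [Fact q.Prime] : ℤ_[q] →+* AlgebraicClosure ℚ_[q] :=
  (algebraMap ℚ_[q] (AlgebraicClosure ℚ_[q])).comp PadicInt.Coe.ringHom

section
variable {q : ℕ} [Fact q.Prime] {v : AlgebraicClosure ℚ_[q] → ℚ}

theorem φ_ne {x : ℤ_[q]} (hx : x ≠ 0) : φ q x ≠ 0 := by
  change algebraMap ℚ_[q] (AlgebraicClosure ℚ_[q]) (x : ℚ_[q]) ≠ 0
  simpa using hx

theorem v_φ (hv : IsValuationExt q v) {x : ℤ_[q]} (hx : x ≠ 0) : v (φ q x) = x.valuation := by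
  have := hv.2.2 (x : ℚ_[q]) (by simpa using hx)
  rw [PadicInt.valuation_coe] at this
  exact_mod_cast this

theorem P_φ (hv : IsValuationExt q v) (x : ℤ_[q]) : P v 0 (φ q x) := by
  by_cases hx : x = 0
  · left; simp [hx]
  · right; rw [v_φ hv hx]; positivity

theorem v_unit (hv : IsValuationExt q v) {x : ℤ_[q]} (hx : IsUnit x) : v (φ q x) = 0 := by
  obtain ⟨y, hy⟩ := hx.exists_right_inv
  have h1 := hv.1 (φ q x) (φ q y) (φ_ne hx.ne_zero) (φ_ne (right_ne_zero_of_mul_eq_one hy))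
  rw [← map_mul, hy, map_one, v_one hv, v_φ hv hx.ne_zero,
    v_φ hv (right_ne_zero_of_mul_eq_one hy)] at h1
  rw [v_φ hv hx.ne_zero]
  have : (0 : ℚ) ≤ x.valuation := by positivity
  have : (0 : ℚ) ≤ y.valuation := by positivity
  linarith

theorem v_q (hv : IsValuationExt q v) : v (q : AlgebraicClosure ℚ_[q]) = 1 := by
  have := v_φ hv (x := (q : ℤ_[q])) (by simpa using (Fact.out : q.Prime).ne_zero)
  simpa using this

theorem factor (n : ℤ) (hn : n ≠ 0) (k : ℕ) (h : (n : ℚ_[q]).valuation = k) :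
    ∃ e : ℤ_[q], IsUnit e ∧ (n : ℤ_[q]) = e * (q : ℤ_[q]) ^ k := by
  have h0 : (n : ℤ_[q]) ≠ 0 := by simpa using hn
  refine ⟨_, (PadicInt.unitCoeff h0).isUnit, ?_⟩
  have h2 : (n : ℤ_[q]).valuation = k := by
    have := PadicInt.valuation_coe (n : ℤ_[q])
    push_cast at this
    rw [h] at this
    exact_mod_cast this.symm
  have := PadicInt.unitCoeff_spec h0
  rw [h2] at this
  exact this

end

end S7

/-- **Lemma 5.17** (together with the surrounding facts).  Let `r ≥ 5` be a prime and `z, s`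
nonzero integers with `v_r(z) = 1` and `v_r(s) = (r+1)/2`.  Let `Δ = s² - 4z^r` and `√Δ` a
square root of `Δ` in an algebraic closure of `ℚ_r`.  Then `v_r(Δ) = r`, the element
`π = √Δ / r^((r-1)/2)` satisfies `v_r(π) = 1/2` (so it is a uniformizer of the ramified
quadratic extension `ℚ_r(√Δ)/ℚ_r`), and `u = -(s + √Δ)/(2π^r)` satisfies `v_r(u) = 0` and
`v_r(u^r - u) = 1/2` (i.e. `u` is a unit and `u^r - u` a uniformizer of `ℚ_r(√Δ)`). -/
theorem stmt_7 (r : ℕ) [Fact r.Prime] (hr : 5 ≤ r)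
    (z s : ℤ) (hz0 : z ≠ 0) (hs0 : s ≠ 0)
    (hz : ((z : ℚ_[r])).valuation = 1)
    (hs : 2 * ((s : ℚ_[r])).valuation = (r : ℤ) + 1)
    (v : AlgebraicClosure ℚ_[r] → ℚ) (hv : IsValuationExt r v)
    (sqrtD π u : AlgebraicClosure ℚ_[r])
    (hsq : sqrtD ^ 2 = ((s ^ 2 - 4 * z ^ r : ℤ) : AlgebraicClosure ℚ_[r]))
    (hπ : π = sqrtD / (r : AlgebraicClosure ℚ_[r]) ^ ((r - 1) / 2))
    (hu : u = -(((s : ℤ) : AlgebraicClosure ℚ_[r]) + sqrtD) / (2 * π ^ r)) :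
    v ((s ^ 2 - 4 * z ^ r : ℤ) : AlgebraicClosure ℚ_[r]) = (r : ℚ) ∧
    v π = 1 / 2 ∧ v u = 0 ∧ v (u ^ r - u) = 1 / 2 := by
  have hp : r.Prime := Fact.out
  obtain ⟨m, hm⟩ : ∃ m, r = 2 * m + 1 := hp.odd_of_ne_two (by omega)
  obtain ⟨S, hSu, hS⟩ := S7.factor (q := r) s hs0 (m + 1) (by push_cast; omega)
  obtain ⟨Z, hZu, hZ⟩ := S7.factor (q := r) z hz0 1 (by simpa using hz)
  have h2u : IsUnit (2 : ℤ_[r]) := by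
    have : ‖((2 : ℕ) : ℤ_[r])‖ = 1 := by
      rw [PadicInt.norm_natCast_eq_one_iff, Nat.coprime_primes hp Nat.prime_two]; omega
    exact_mod_cast PadicInt.isUnit_iff.2 this
  obtain ⟨δ, hδ⟩ : ∃ δ : ℤ_[r], δ = r * S ^ 2 - 4 * Z ^ r := ⟨_, rfl⟩
  have hδu : IsUnit δ := by
    by_contra hcon
    have h1 : δ ∈ IsLocalRing.maximalIdeal ℤ_[r] := hcon
    have h2 : (r : ℤ_[r]) * S ^ 2 ∈ IsLocalRing.maximalIdeal ℤ_[r] := by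
      rw [PadicInt.maximalIdeal_eq_span_p, Ideal.mem_span_singleton]
      exact dvd_mul_right _ _
    have h3 := Ideal.sub_mem _ h2 h1
    have h4 : (r : ℤ_[r]) * S ^ 2 - δ = 2 ^ 2 * Z ^ r := by rw [hδ]; ring
    rw [h4] at h3
    exact h3 ((h2u.pow 2).mul (hZu.pow r))
  have hD : ((s ^ 2 - 4 * z ^ r : ℤ) : ℤ_[r]) = (r : ℤ_[r]) ^ r * δ := by
    push_cast
    rw [hS, hZ, hδ]
    have : (r : ℤ_[r]) ^ r = (r : ℤ_[r]) ^ (2 * m + 1) := by rw [← hm]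
    rw [pow_one, mul_pow Z, this]
    ring
  have hr0 : (r : AlgebraicClosure ℚ_[r]) ≠ 0 := by
    simpa using hp.ne_zero
  have hDK : ((s ^ 2 - 4 * z ^ r : ℤ) : AlgebraicClosure ℚ_[r]) =
      (r : AlgebraicClosure ℚ_[r]) ^ r * S7.φ r δ := by
    have := congrArg (S7.φ r) hD
    rwa [map_intCast, map_mul, map_pow, map_natCast] at this
  have hsK : ((s : ℤ) : AlgebraicClosure ℚ_[r]) =
      S7.φ r S * (r : AlgebraicClosure ℚ_[r]) ^ (m + 1) := by
    have := congrArg (S7.φ r) hS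
    rwa [map_intCast, map_mul, map_pow, map_natCast] at this
  have hδ0 : S7.φ r δ ≠ 0 := S7.φ_ne hδu.ne_zero
  have hvD : v ((s ^ 2 - 4 * z ^ r : ℤ) : AlgebraicClosure ℚ_[r]) = (r : ℚ) := by
    rw [hDK, hv.1 _ _ (pow_ne_zero _ hr0) hδ0, S7.v_pow hv _ hr0, S7.v_q hv, S7.v_unit hv hδu]
    ring
  rw [hDK] at hsq
  have hm2 : (r - 1) / 2 = m := by omega
  rw [hm2] at hπ
  have hπr : sqrtD = π * (r : AlgebraicClosure ℚ_[r]) ^ m := by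
    rw [hπ]; field_simp
  have hπ2 : π ^ 2 = r * S7.φ r δ := by
    have h1 : (r : AlgebraicClosure ℚ_[r]) ^ r = (r : AlgebraicClosure ℚ_[r]) ^ (2 * m + 1) := by
      rw [← hm]
    rw [hπr, h1] at hsq
    apply mul_right_cancel₀ (pow_ne_zero (2 * m) hr0)
    linear_combination hsq
  have hπ0 : π ≠ 0 := by
    rintro rfl
    exact mul_ne_zero hr0 hδ0 (by rw [← hπ2]; simp)
  have hvπ : v π = 1 / 2 := by
    have h1 := S7.v_pow hv π hπ0 2
    rw [hπ2, hv.1 _ _ hr0 hδ0, S7.v_q hv, S7.v_unit hv hδu] at h1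
    push_cast at h1; linarith
  obtain ⟨c, hc⟩ := ((h2u.mul (hδu.pow m))).exists_right_inv
  obtain ⟨d, hd⟩ := ((h2u.mul (hδu.pow (m + 1)))).exists_right_inv
  have hau : IsUnit (-c) := (IsUnit.of_mul_eq_one_right _ hc).neg
  have hbu : IsUnit (-(S * d)) := (hSu.mul (IsUnit.of_mul_eq_one_right _ hd)).neg
  have hcK := congrArg (S7.φ r) hc
  have hdK := congrArg (S7.φ r) hd
  simp only [map_mul, map_pow, map_one, map_ofNat] at hcK hdK
  have hπpow : π ^ r = π * (r * S7.φ r δ) ^ m := by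
    rw [← hπ2, ← pow_mul, mul_comm, ← pow_succ, ← hm]
  have huab : u = S7.φ r (-c) + S7.φ r (-(S * d)) * π := by
    rw [hu, div_eq_iff (mul_ne_zero two_ne_zero (pow_ne_zero _ hπ0)), hπpow, hsK, hπr]
    simp only [map_mul, map_neg, mul_pow]
    linear_combination (π * (r : AlgebraicClosure ℚ_[r]) ^ m) * hcK +
      (S7.φ r S * (r : AlgebraicClosure ℚ_[r]) ^ (m + 1)) * hdK +
      (2 * S7.φ r S * S7.φ r d * (r : AlgebraicClosure ℚ_[r]) ^ m * S7.φ r δ ^ m) * hπ2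
  generalize -c = a at *
  generalize -(S * d) = b at *
  have hb0 : S7.φ r b * π ≠ 0 := mul_ne_zero (S7.φ_ne hbu.ne_zero) hπ0
  have hvb : v (S7.φ r b * π) = 1 / 2 := by
    rw [hv.1 _ _ (S7.φ_ne hbu.ne_zero) hπ0, hvπ, S7.v_unit hv hbu]; ring
  refine ⟨hvD, hvπ, ?_, ?_⟩
  · rw [huab]
    exact (S7.v_add hv (by norm_num : (0 : ℚ) < 1 / 2) (S7.φ_ne hau.ne_zero)
      (S7.v_unit hv hau) (Or.inr hvb.ge)).2
  · obtain ⟨w, hw, hfr⟩ := S7.frob hv (S7.P_φ hv a)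
      (S7.P_mono (by norm_num) (Or.inr hvb.ge : S7.P v (1 / 2) (S7.φ r b * π)))
    obtain ⟨w', hw'⟩ := S7.fermat a
    have hfK := congrArg (S7.φ r) hw'
    simp only [map_mul, map_pow, map_sub, map_natCast] at hfK
    have hPr : S7.P v 1 (r : AlgebraicClosure ℚ_[r]) := Or.inr (S7.v_q hv).ge
    have e1 : S7.P v 1 ((r : AlgebraicClosure ℚ_[r]) * S7.φ r w') := by
      simpa using S7.P_mul hv hPr (S7.P_φ hv w')
    have e2 : S7.P v 1 ((r : AlgebraicClosure ℚ_[r]) * w) := by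
      simpa using S7.P_mul hv hPr hw
    have e3 : S7.P v 1 ((S7.φ r b * π) ^ r) := by
      right
      rw [S7.v_pow hv _ hb0, hvb]
      have : (5 : ℚ) ≤ r := by exact_mod_cast hr
      linarith
    have key : u ^ r - u = -(S7.φ r b * π) + (r * S7.φ r w' + r * w + (S7.φ r b * π) ^ r) := by
      rw [huab, hfr]; linear_combination hfK
    rw [key]
    exact (S7.v_add hv (by norm_num : (1 / 2 : ℚ) < 1) (neg_ne_zero.2 hb0)
      (by rw [S7.v_neg hv, hvb]) (S7.P_add hv (S7.P_add hv e1 e2) e3)).2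
end

section
/- Let r ≥ 5 be a prime and let z, s be nonzero integers with v_r(z) = 1 and v_r(s) = (r+1)/2. Set Δ = s² − 4z^r, fix a square root √Δ in an algebraic closure of ℚ_r, let F′ = ℚ_r(√Δ), let π = √Δ / r^((r−1)/2) (a uniformizer of F′), let u = −(s + √Δ)/(2π^r), and fix α₀ in the algebraic closure with α₀^r = −(s + √Δ)/2. Then (α₀/π)^r = u, the polynomial X^r − u is irreducible over F′ and is the minimal polynomial of α₀/π over F′, and ℚ_r(α₀) = F′(α₀/π). -/
open Polynomial

theorem aux_im (r m : ℕ) [hp : Fact r.Prime] (hm : r = 2 * m + 1) (hm1 : m ≠ 0) (P c d : ℤ_[r])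
    (hP : ‖P‖ < 1) : ‖((⟨c, d⟩ : QuadraticAlgebra ℤ_[r] P 0) ^ r).im‖ < 1 := by
  have h1 : (⟨c, d⟩ : QuadraticAlgebra ℤ_[r] P 0) =
      algebraMap _ _ c + algebraMap _ _ d * QuadraticAlgebra.omega := by
    ext <;> simp
  obtain ⟨t, ht⟩ := exists_add_pow_prime_eq hp.out
    (algebraMap ℤ_[r] (QuadraticAlgebra ℤ_[r] P 0) c)
    (algebraMap ℤ_[r] (QuadraticAlgebra ℤ_[r] P 0) d * QuadraticAlgebra.omega)
  have h2 : (QuadraticAlgebra.omega : QuadraticAlgebra ℤ_[r] P 0) ^ r =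
      algebraMap _ _ (P ^ m) * QuadraticAlgebra.omega := by
    have : (QuadraticAlgebra.omega : QuadraticAlgebra ℤ_[r] P 0) ^ 2 = algebraMap _ _ P := by
      rw [sq]; ext <;> simp
    calc (QuadraticAlgebra.omega : QuadraticAlgebra ℤ_[r] P 0) ^ r
        = QuadraticAlgebra.omega ^ (2 * m + 1) := by rw [← hm]
      _ = _ := by rw [pow_succ, pow_mul, this, map_pow]
  have h3 : ((⟨c, d⟩ : QuadraticAlgebra ℤ_[r] P 0) ^ r) =
      algebraMap _ _ (c ^ r) + algebraMap _ _ (d ^ r * P ^ m) * QuadraticAlgebra.omega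
      + algebraMap _ _ (r : ℤ_[r]) * (algebraMap _ _ c *
        (algebraMap _ _ d * QuadraticAlgebra.omega) * t) := by
    rw [h1, ht, mul_pow, h2]
    simp only [map_pow, map_mul, map_natCast]
    ring
  obtain ⟨k, hk⟩ := (PadicInt.norm_lt_one_iff_dvd P).1 hP
  rw [PadicInt.norm_lt_one_iff_dvd, h3]
  generalize (algebraMap _ _ c *
        (algebraMap _ _ d * QuadraticAlgebra.omega) * t) = w
  generalize c ^ r = c'
  generalize hE : d ^ r * P ^ m = E
  have : (algebraMap ℤ_[r] (QuadraticAlgebra ℤ_[r] P 0) c' +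
      algebraMap _ _ E * QuadraticAlgebra.omega
      + algebraMap _ _ (r : ℤ_[r]) * w).im = E + r * w.im := by
    simp
  rw [this, ← hE]
  refine dvd_add (dvd_mul_of_dvd_right (dvd_pow ⟨k, hk⟩ hm1) _) (dvd_mul_right _ _)

theorem aux_nsq (r : ℕ) [hp : Fact r.Prime] (x : ℚ_[r]) : ‖x‖ ^ 2 ≠ (r : ℝ)⁻¹ := by
  have h1 : (1 : ℝ) < r := by exact_mod_cast hp.out.one_lt
  intro h
  by_cases hx : x = 0
  · subst hx
    have : (r : ℝ)⁻¹ ≠ 0 := by positivity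
    simp at h
    exact this (by simp [← h])
  rw [Padic.norm_eq_zpow_neg_valuation hx, ← zpow_natCast, ← zpow_mul, ← zpow_neg_one] at h
  have := zpow_right_injective₀ (by linarith) (by linarith) h
  push_cast at this
  omega

theorem aux_nopow (r m : ℕ) [hp : Fact r.Prime] (hm : r = 2 * m + 1) (hm1 : m ≠ 0)
    (P a b : ℚ_[r]) (hP : ‖P‖ = (r : ℝ)⁻¹) (ha : ‖a‖ = 1) (hb : ‖b‖ = 1)
    (y : QuadraticAlgebra ℚ_[r] P 0) : y ^ r ≠ ⟨a, b⟩ := by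
  intro h
  have h1 : (1 : ℝ) < r := by exact_mod_cast hp.out.one_lt
  have hr1 : (r : ℝ)⁻¹ < 1 := inv_lt_one_of_one_lt₀ h1
  have hr0 : (0 : ℝ) < (r : ℝ)⁻¹ := by positivity
  obtain ⟨c, d⟩ := y
  have hN := congrArg QuadraticAlgebra.norm h
  rw [map_pow, QuadraticAlgebra.norm_def, QuadraticAlgebra.norm_def] at hN
  simp only [zero_mul, add_zero] at hN
  have hN1 : ‖a * a - P * b * b‖ = 1 := by
    rw [sub_eq_add_neg, Padic.add_eq_max_of_ne] <;> simp [ha, hb, hP]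
    · exact hr1.le
    · exact hp.out.ne_one
  have hN2 : ‖c * c - P * d * d‖ = 1 := by
    have := congrArg norm hN
    simp only [norm_pow] at this
    have e : ‖c * c - P * d * d‖ ^ r = 1 := by
      rw [this]; simpa using hN1
    exact (pow_eq_one_iff_of_nonneg (norm_nonneg _) hp.out.ne_zero).1 e
  have hne : ‖c * c‖ ≠ ‖-(P * d * d)‖ := by
    intro e
    simp only [norm_neg, norm_mul, hP] at e
    by_cases hd : d = 0
    · subst hd
      have : c = 0 := by simpa using e
      subst this
      simp at hN2
    · apply aux_nsq r (c / d)
      have : ‖d‖ ≠ 0 := by simpa using hd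
      rw [norm_div]
      field_simp
      field_simp at e
      linarith
  rw [sub_eq_add_neg, Padic.add_eq_max_of_ne hne] at hN2
  have hc : ‖c‖ ≤ 1 := by
    have := le_max_left ‖c * c‖ ‖-(P * d * d)‖
    rw [hN2, norm_mul] at this
    nlinarith [norm_nonneg c]
  have hd : ‖d‖ ≤ 1 := by
    have := le_max_right ‖c * c‖ ‖-(P * d * d)‖
    rw [hN2, norm_neg, norm_mul, norm_mul, hP] at this
    by_cases hd0 : d = 0
    · simp [hd0]
    by_contra hlt
    rw [Padic.norm_le_one_iff_val_nonneg, not_le] at hlt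
    have e : (r : ℝ) ≤ ‖d‖ := by
      rw [Padic.norm_eq_zpow_neg_valuation hd0]
      calc (r : ℝ) = (r : ℝ) ^ (1 : ℤ) := by simp
        _ ≤ _ := zpow_le_zpow_right₀ h1.le (by omega)
    have : (1 : ℝ) * r ≤ (r : ℝ)⁻¹ * ‖d‖ * ‖d‖ := by
      apply mul_le_mul _ e (by positivity) (by positivity)
      calc (1 : ℝ) = (r : ℝ)⁻¹ * r := by field_simp
        _ ≤ _ := by gcongr
    linarith
  have hP1 : ‖P‖ ≤ 1 := by rw [hP]; exact hr1.le
  obtain ⟨c, rfl⟩ : ∃ x : ℤ_[r], (x : ℚ_[r]) = c := ⟨⟨c, hc⟩, rfl⟩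
  obtain ⟨d, rfl⟩ : ∃ x : ℤ_[r], (x : ℚ_[r]) = d := ⟨⟨d, hd⟩, rfl⟩
  obtain ⟨P, rfl⟩ : ∃ x : ℤ_[r], (x : ℚ_[r]) = P := ⟨⟨P, hP1⟩, rfl⟩
  have key := aux_im r m hm hm1 P c d (by rw [PadicInt.norm_def, hP]; exact hr1)
  have hsm : ∀ x : ℤ_[r], ∀ y : ℚ_[r], x • y = (x : ℚ_[r]) * y := fun x y ↦ rfl
  let f : QuadraticAlgebra ℤ_[r] P 0 →ₐ[ℤ_[r]] QuadraticAlgebra ℚ_[r] (P : ℚ_[r]) 0 :=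
    QuadraticAlgebra.lift ⟨QuadraticAlgebra.omega, by
      ext <;> simp [hsm, QuadraticAlgebra.re_one, QuadraticAlgebra.im_one]⟩
  have hf : ∀ z, f z = ⟨(z.re : ℚ_[r]), (z.im : ℚ_[r])⟩ := by
    intro z
    change z.re • (1 : QuadraticAlgebra ℚ_[r] (P : ℚ_[r]) 0) + z.im • QuadraticAlgebra.omega = _
    ext <;> simp [hsm, QuadraticAlgebra.re_one, QuadraticAlgebra.im_one]
  have e1 := hf ⟨c, d⟩
  have e2 : f (⟨c, d⟩ ^ r) = ⟨a, b⟩ := by rw [map_pow, e1, h]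
  rw [hf] at e2
  have e3 := congrArg QuadraticAlgebra.im e2
  simp only at e3
  rw [← e3] at hb
  rw [PadicInt.norm_def] at key
  linarith


/-- **Lemma 5.18.** Let `r ≥ 5` be a prime and `z, s` nonzero integers with `v_r(z) = 1` and
`v_r(s) = (r+1)/2`.  Let `Δ = s² - 4z^r`, `√Δ` a square root of `Δ` in an algebraic closure
of `ℚ_r`, `F′ = ℚ_r(√Δ)`, `π = √Δ / r^((r-1)/2)`, `u = -(s + √Δ)/(2π^r)`, and `α₀` with
`α₀^r = -(s + √Δ)/2`.  Then `(α₀/π)^r = u`, the polynomial `X^r - u` is irreducible over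
`F′` and is the minimal polynomial of `α₀/π` over `F′`, and `ℚ_r(α₀) = F′(α₀/π)`. -/
theorem stmt_9 (r : ℕ) [Fact r.Prime] (hr : 5 ≤ r)
    (z s : ℤ) (hz0 : z ≠ 0) (hs0 : s ≠ 0)
    (hz : ((z : ℚ_[r])).valuation = 1)
    (hs : 2 * ((s : ℚ_[r])).valuation = (r : ℤ) + 1)
    (sqrtD π u α₀ : AlgebraicClosure ℚ_[r])
    (hsq : sqrtD ^ 2 = ((s ^ 2 - 4 * z ^ r : ℤ) : AlgebraicClosure ℚ_[r]))
    (hπ : π = sqrtD / (r : AlgebraicClosure ℚ_[r]) ^ ((r - 1) / 2))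
    (hu : u = -(((s : ℤ) : AlgebraicClosure ℚ_[r]) + sqrtD) / (2 * π ^ r))
    (hα : α₀ ^ r = -(((s : ℤ) : AlgebraicClosure ℚ_[r]) + sqrtD) / 2) :
    (α₀ / π) ^ r = u ∧
    ∃ hmem : u ∈ IntermediateField.adjoin ℚ_[r] {sqrtD},
      Irreducible (X ^ r -
        C (⟨u, hmem⟩ : IntermediateField.adjoin ℚ_[r] {sqrtD})) ∧
      minpoly (IntermediateField.adjoin ℚ_[r] {sqrtD}) (α₀ / π) =
        X ^ r - C (⟨u, hmem⟩ : IntermediateField.adjoin ℚ_[r] {sqrtD}) ∧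
      IntermediateField.adjoin ℚ_[r] {α₀} =
        IntermediateField.adjoin ℚ_[r] {sqrtD, α₀ / π} := by
  have hp : r.Prime := Fact.out
  have h1 : (1 : ℝ) < r := by exact_mod_cast hp.one_lt
  obtain ⟨m, hm⟩ : ∃ m, r = 2 * m + 1 := hp.odd_of_ne_two (by omega)
  have hm1 : m ≠ 0 := by omega
  have hm2 : (r - 1) / 2 = m := by omega
  rw [hm2] at hπ
  have hrQ : (r : ℚ_[r]) ≠ 0 := by exact_mod_cast hp.ne_zero
  have hrA : (r : AlgebraicClosure ℚ_[r]) ≠ 0 := by exact_mod_cast hp.ne_zero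
  have hzQ : (z : ℚ_[r]) ≠ 0 := by exact_mod_cast hz0
  have hsQ : (s : ℚ_[r]) ≠ 0 := by exact_mod_cast hs0
  have nz : ‖(z : ℚ_[r])‖ = (r : ℝ)⁻¹ := by
    rw [Padic.norm_eq_zpow_neg_valuation hzQ, hz]; simp
  have ns : ‖(s : ℚ_[r])‖ = (r : ℝ)⁻¹ ^ (m + 1) := by
    rw [Padic.norm_eq_zpow_neg_valuation hsQ,
      show (s : ℚ_[r]).valuation = ((m + 1 : ℕ) : ℤ) by push_cast; omega]
    rw [zpow_neg, zpow_natCast, inv_pow]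
  have n2 : ‖(2 : ℚ_[r])‖ = 1 := by
    have := (Padic.norm_natCast_eq_one_iff (p := r) (n := 2)).2
      ((Nat.coprime_primes hp Nat.prime_two).2 (by omega))
    simpa using this
  set q : ℝ := (r : ℝ)⁻¹ with hq
  have hq1 : q < 1 := inv_lt_one_of_one_lt₀ h1
  have hq0 : 0 < q := by positivity
  have nr : ‖(r : ℚ_[r])‖ = q := Padic.norm_p
  obtain ⟨P, hPdef⟩ : ∃ P : ℚ_[r], P = ((s : ℚ_[r]) ^ 2 - 4 * (z : ℚ_[r]) ^ r) / (r : ℚ_[r]) ^ (2 * m) := ⟨_, rfl⟩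
  have nP : ‖P‖ = q := by
    have e1 : ‖(s : ℚ_[r]) ^ 2‖ = q ^ (r + 1) := by
      rw [norm_pow, ns, ← pow_mul]; congr 1; omega
    have e2 : ‖-(4 * (z : ℚ_[r]) ^ r)‖ = q ^ r := by
      rw [norm_neg, norm_mul, norm_pow, nz, show (4 : ℚ_[r]) = 2 * 2 by norm_num, norm_mul, n2]
      ring
    have hlt : q ^ (r + 1) < q ^ r := pow_lt_pow_right_of_lt_one₀ hq0 hq1 (by omega)
    rw [hPdef, norm_div, sub_eq_add_neg, Padic.add_eq_max_of_ne (by rw [e1, e2]; exact hlt.ne), e1, e2,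
      max_eq_right hlt.le, norm_pow, nr]
    have : q ^ r = q ^ (2 * m) * q := by rw [← pow_succ]; congr 1
    rw [this]
    field_simp
  have hP0 : P ≠ 0 := by
    intro h; rw [h, norm_zero] at nP; linarith
  have hππ : π ^ 2 = algebraMap ℚ_[r] _ P := by
    rw [hπ, div_pow, hsq, hPdef]
    push_cast
    simp only [map_div₀, map_sub, map_mul, map_pow, map_intCast, map_natCast, map_ofNat]
    rw [← pow_mul, mul_comm m 2]
  have hπ0 : π ≠ 0 := by
    intro h
    rw [h] at hππ
    apply hP0
    have : algebraMap ℚ_[r] (AlgebraicClosure ℚ_[r]) P = 0 := by rw [← hππ]; simp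
    simpa using this
  have hsD : sqrtD = (r : AlgebraicClosure ℚ_[r]) ^ m * π := by
    rw [hπ]; field_simp
  have hroot : (α₀ / π) ^ r = u := by
    rw [div_pow, hα, hu]; field_simp
  have hP0A : algebraMap ℚ_[r] (AlgebraicClosure ℚ_[r]) P ≠ 0 := by simpa using hP0
  obtain ⟨a, ha⟩ : ∃ a : ℚ_[r], a = -(r : ℚ_[r]) ^ m / (2 * P ^ m) := ⟨_, rfl⟩
  obtain ⟨b, hb⟩ : ∃ b : ℚ_[r], b = -(s : ℚ_[r]) / (2 * P ^ (m + 1)) := ⟨_, rfl⟩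
  have na : ‖a‖ = 1 := by
    rw [ha, norm_div, norm_neg, norm_mul, norm_pow, norm_pow, nr, nP, n2]; field_simp
  have nb : ‖b‖ = 1 := by
    rw [hb, norm_div, norm_neg, norm_mul, norm_pow, ns, nP, n2]; field_simp
  have huab : u = algebraMap ℚ_[r] _ a + algebraMap ℚ_[r] _ b * π := by
    have hπr : π ^ r = (algebraMap ℚ_[r] (AlgebraicClosure ℚ_[r]) P) ^ m * π := by
      calc π ^ r = π ^ (2 * m + 1) := by rw [← hm]
        _ = _ := by rw [pow_succ, pow_mul, hππ]
    rw [hu, hπr, ha, hb, hsD]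
    simp only [map_div₀, map_mul, map_pow, map_intCast, map_natCast, map_ofNat, map_neg]
    field_simp
    linear_combination (s : AlgebraicClosure ℚ_[r]) * (algebraMap ℚ_[r] (AlgebraicClosure ℚ_[r]) P) ^ m * hππ
  let φ : QuadraticAlgebra ℚ_[r] P 0 →ₐ[ℚ_[r]] AlgebraicClosure ℚ_[r] :=
    QuadraticAlgebra.lift ⟨π, by rw [← sq, hππ]; simp [Algebra.smul_def]⟩
  have hφ : ∀ w, φ w = algebraMap ℚ_[r] _ w.re + algebraMap ℚ_[r] _ w.im * π := by
    intro w
    change w.re • (1 : AlgebraicClosure ℚ_[r]) + w.im • π = _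
    simp [Algebra.smul_def]
  have hφinj : Function.Injective φ := by
    rw [injective_iff_map_eq_zero]
    intro w hw
    rw [hφ] at hw
    by_cases hi : w.im = 0
    · rw [hi] at hw
      have : w.re = 0 := by simpa using hw
      ext <;> simp [hi, this]
    · exfalso
      have hiA : algebraMap ℚ_[r] (AlgebraicClosure ℚ_[r]) w.im ≠ 0 := by simpa using hi
      have e : π = algebraMap ℚ_[r] _ (-w.re / w.im) := by
        rw [map_div₀, map_neg, eq_div_iff hiA]
        linear_combination hw
      have e2 : (-w.re / w.im) ^ 2 = P := by
        apply (algebraMap ℚ_[r] (AlgebraicClosure ℚ_[r])).injective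
        rw [map_pow, ← e, hππ]
      apply aux_nsq r (-w.re / w.im)
      rw [← norm_pow, e2, nP]
  have hmemF : ∀ x ∈ IntermediateField.adjoin ℚ_[r] {sqrtD}, ∃ w, φ w = x := by
    intro x hx
    rw [← IntermediateField.mem_toSubalgebra,
      IntermediateField.adjoin_toSubalgebra_of_isAlgebraic
        (fun x _ ↦ Algebra.IsAlgebraic.isAlgebraic x)] at hx
    have : Algebra.adjoin ℚ_[r] {sqrtD} ≤ φ.range := by
      rw [Algebra.adjoin_le_iff, Set.singleton_subset_iff]
      refine ⟨⟨0, (r : ℚ_[r]) ^ m⟩, ?_⟩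
      change φ _ = _
      rw [hφ, hsD]; simp
    exact this hx
  have hπof : ∀ K : IntermediateField ℚ_[r] (AlgebraicClosure ℚ_[r]), sqrtD ∈ K → π ∈ K := by
    intro K hK
    rw [hπ]
    exact div_mem hK (pow_mem (natCast_mem K r) m)
  have hDF : sqrtD ∈ IntermediateField.adjoin ℚ_[r] {sqrtD} :=
    IntermediateField.mem_adjoin_simple_self _ _
  have hmem : u ∈ IntermediateField.adjoin ℚ_[r] {sqrtD} := by
    rw [huab]
    exact add_mem (IntermediateField.algebraMap_mem _ _)
      (mul_mem (IntermediateField.algebraMap_mem _ _) (hπof _ hDF))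
  have hirr : Irreducible (X ^ r -
        C (⟨u, hmem⟩ : IntermediateField.adjoin ℚ_[r] {sqrtD})) := by
    apply X_pow_sub_C_irreducible_of_prime hp
    intro y hy
    obtain ⟨w, hw⟩ := hmemF y y.2
    apply aux_nopow r m hm hm1 P a b nP na nb w
    apply hφinj
    rw [map_pow, hw, hφ, ← huab]
    exact congrArg Subtype.val hy
  refine ⟨hroot, hmem, hirr, ?_, ?_⟩
  · symm
    apply minpoly.eq_of_irreducible_of_monic hirr
    · simp only [map_sub, map_pow, aeval_X, aeval_C]
      rw [hroot]
      exact sub_self u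
    · exact monic_X_pow_sub_C _ hp.ne_zero
  · apply le_antisymm
    · rw [IntermediateField.adjoin_simple_le_iff]
      have hD : sqrtD ∈ IntermediateField.adjoin ℚ_[r] {sqrtD, α₀ / π} :=
        IntermediateField.subset_adjoin _ _ (by simp)
      have h2 : α₀ / π ∈ IntermediateField.adjoin ℚ_[r] {sqrtD, α₀ / π} :=
        IntermediateField.subset_adjoin _ _ (by simp)
      have := mul_mem h2 (hπof _ hD)
      rwa [div_mul_cancel₀ _ hπ0] at this
    · rw [IntermediateField.adjoin_le_iff]
      have hA : α₀ ∈ IntermediateField.adjoin ℚ_[r] {α₀} :=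
        IntermediateField.mem_adjoin_simple_self _ _
      have hD : sqrtD ∈ IntermediateField.adjoin ℚ_[r] {α₀} := by
        have e : sqrtD = -(α₀ ^ r + α₀ ^ r) - (s : AlgebraicClosure ℚ_[r]) := by
          rw [hα]; ring
        rw [e]
        exact sub_mem (neg_mem (add_mem (pow_mem hA r) (pow_mem hA r))) (intCast_mem _ s)
      intro x hx
      rcases hx with rfl | rfl
      · exact hD
      · exact div_mem hA (hπof _ hD)
end

section
/- Let t₀ be a rational number with t₀ ≠ 0 and t₀ ≠ 1. Then the Weierstrass curve y² = x³ + 2x² + (1/t₀)·x over ℚ has nonzero discriminant (so it is an elliptic curve), and its j-invariant equals 64·(4t₀ − 3)³ / (t₀ − 1). In particular, if A, B, a, b are nonzero integers with Aa² + Bb^r ≠ 0 (r a positive integer) and t₀ = Aa²/(Aa² + Bb^r), the j-invariant equals −2⁶·(Aa² − 3Bb^r)³ / ((Aa² + Bb^r)²·Bb^r). -/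
/-- The computation in the proofs of Theorem 4.2 and Lemma 4.4: the Weierstrass curve
`y² = x³ + 2x² + (1/t₀)x` over `ℚ` (with `t₀ ≠ 0, 1`) has nonzero discriminant, its
`j`-invariant (`c₄³/Δ`) equals `64(4t₀-3)³/(t₀-1)`, and when
`t₀ = Aa²/(Aa² + Bb^r)` this `j`-invariant equals `-2⁶(Aa²-3Bb^r)³/((Aa²+Bb^r)²·Bb^r)`. -/
theorem stmt_11 (t₀ : ℚ) (ht0 : t₀ ≠ 0) (ht1 : t₀ ≠ 1)
    (W : WeierstrassCurve ℚ)
    (hW : W = { a₁ := 0, a₂ := 2, a₃ := 0, a₄ := 1 / t₀, a₆ := 0 }) :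
    W.Δ ≠ 0 ∧
    W.c₄ ^ 3 / W.Δ = 64 * (4 * t₀ - 3) ^ 3 / (t₀ - 1) ∧
    ∀ (A B a b : ℤ) (r : ℕ), 0 < r → A ≠ 0 → B ≠ 0 → a ≠ 0 → b ≠ 0 →
      A * a ^ 2 + B * b ^ r ≠ 0 →
      t₀ = (A * a ^ 2 : ℚ) / ((A * a ^ 2 : ℚ) + (B * b ^ r : ℚ)) →
      W.c₄ ^ 3 / W.Δ =
        -2 ^ 6 * ((A * a ^ 2 : ℚ) - 3 * (B * b ^ r : ℚ)) ^ 3 /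
          (((A * a ^ 2 : ℚ) + (B * b ^ r : ℚ)) ^ 2 * (B * b ^ r : ℚ)) := by
  have hs : t₀ - 1 ≠ 0 := sub_ne_zero.mpr ht1
  have hD : W.Δ = 64 * (t₀ - 1) / t₀ ^ 3 := by
    subst hW
    simp only [WeierstrassCurve.Δ, WeierstrassCurve.b₂, WeierstrassCurve.b₄,
      WeierstrassCurve.b₆, WeierstrassCurve.b₈]
    field_simp
    ring
  have hc : W.c₄ = 16 * (4 * t₀ - 3) / t₀ := by
    subst hW
    simp only [WeierstrassCurve.c₄, WeierstrassCurve.b₂, WeierstrassCurve.b₄]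
    field_simp
    ring
  have hj : W.c₄ ^ 3 / W.Δ = 64 * (4 * t₀ - 3) ^ 3 / (t₀ - 1) := by
    rw [hD, hc]
    field_simp
    ring
  refine ⟨?_, hj, ?_⟩
  · rw [hD]
    exact div_ne_zero (mul_ne_zero (by norm_num) hs) (pow_ne_zero _ ht0)
  · intro A B a b r _ _ hB _ hb hne ht
    rw [hj]
    have hv : (B * b ^ r : ℚ) ≠ 0 :=
      mul_ne_zero (by exact_mod_cast hB) (pow_ne_zero _ (by exact_mod_cast hb))
    have huv : (A * a ^ 2 : ℚ) + (B * b ^ r : ℚ) ≠ 0 := by exact_mod_cast hne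
    generalize (A * a ^ 2 : ℚ) = u at *
    generalize (B * b ^ r : ℚ) = v at *
    have h1 : t₀ - 1 = -v / (u + v) := by
      rw [ht]
      field_simp
      ring
    have h2 : 4 * t₀ - 3 = (u - 3 * v) / (u + v) := by
      rw [ht]
      field_simp
      ring
    rw [h1, h2]
    field_simp
    try ring
end
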